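/- arXiv:1211.5579 — 4 statements merged into one kernel-verified Lean document; each statement's English description precedes it below -/
import Mathlib

section
/- Let (x, y) ∈ E × E with max(v₁, w₁)·δ < dist(x, ∂E) and w₁·δ < dist(y, ∂E). If 2(1 − αd) < 4β < min(1/(2d), α − 1/(2d)), then n^{(1−αd)/2} (ĥₙ(x, y) − h(x, y)) → 0 almost surely as n → ∞. -/
open MeasureTheory ProbabilityTheory Filter

noncomputable def iterK {S : Type*} [MeasurableSpace S] (R : S → Measure S) : ℕ → S → Measure S
  | 0, y => Measure.dirac y
  | n+1, y => (iterK R n y).bind R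

open scoped Topology

/-!
The summands of the estimator are kernels of height `wⱼ ^ (-2d)` evaluated along a sequence with
geometrically decaying covariances, so the sum of the first `m` of them has variance
`O(m ^ (1 + 4βd))`. Divided by `m ^ (2(1 - γ))`, where `γ = (1 - αd) / 2`, this is summable along
the squares `m = k ^ 2`, which gives the almost sure rate there. As the summands are nonnegative,
their partial sums are monotone, and this controls the gaps between consecutive squares.

The bias of the `j`-th summand has two sources: smoothing Lipschitz densities over a ball of radius
`wⱼ δ`, which eventually lies inside `E`, costs a multiple of `wⱼ`, and replacing the law of the
chain by its invariant law costs a geometrically small term. Both are summable against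
`j ^ (-(1 - γ))`.
-/

theorem isLittleO_sum_Icc_of_summable {a : ℕ → ℝ} {s : ℝ} (hs : 0 < s)
    (ha : Summable fun j : ℕ => |a j| * (j : ℝ) ^ (-s)) :
    (fun m : ℕ => ∑ j ∈ Finset.Icc 1 m, a j) =o[atTop] fun m : ℕ => (m : ℝ) ^ s := by
  have h_term (j : ℕ) : Tendsto
      (fun m : ℕ => Set.indicator (Finset.Icc 1 m) (fun j => a j / (m : ℝ) ^ s) j)
      atTop (𝓝 0) := by
    refine squeeze_zero_norm (a := fun m : ℕ => |a j| / (m : ℝ) ^ s) (fun m => ?_)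
      (((tendsto_rpow_atTop hs).comp tendsto_natCast_atTop_atTop).const_div_atTop _)
    refine (norm_indicator_le_norm_self _ _).trans_eq ?_
    rw [norm_div, Real.norm_eq_abs, Real.norm_of_nonneg (by positivity)]
  have h_dom (m j : ℕ) :
      ‖Set.indicator (Finset.Icc 1 m) (fun j => a j / (m : ℝ) ^ s) j‖ ≤ |a j| * (j : ℝ) ^ (-s) := by
    by_cases hj : j ∈ Finset.Icc 1 m
    · have hj' := Finset.mem_Icc.1 hj
      have hj0 : (0 : ℝ) < j := by exact_mod_cast hj'.1
      rw [Set.indicator_of_mem (Finset.mem_coe.2 hj), norm_div, Real.norm_eq_abs,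
        Real.norm_of_nonneg (by positivity), Real.rpow_neg hj0.le, ← div_eq_mul_inv]
      have : (j : ℝ) ≤ m := by exact_mod_cast hj'.2
      gcongr
    · rw [Set.indicator_of_notMem (by simpa using hj), norm_zero]
      positivity
  refine (Asymptotics.isLittleO_iff_tendsto fun m hm => ?_).2 ?_
  · have hm0 : m = 0 := by simpa [Real.rpow_eq_zero, hs.ne'] using hm
    simp [hm0]
  · have h := tendsto_tsum_of_dominated_convergence ha h_term (.of_forall h_dom)
    rw [tsum_zero] at h
    refine h.congr fun m => ?_
    rw [← sum_eq_tsum_indicator, Finset.sum_div]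

theorem tendsto_nat_sqrt_atTop : Tendsto Nat.sqrt atTop atTop :=
  tendsto_atTop_mono' _ (.of_forall fun _ => le_rfl) <|
    tendsto_atTop_atTop.2 fun b => ⟨b ^ 2, fun _ h => Nat.le_sqrt'.2 h⟩

theorem abs_sub_mul_le_of_monotone {T : ℕ → ℝ} (hT : Monotone T) (h : ℝ) {k m l : ℕ}
    (hkm : k ≤ m) (hml : m ≤ l) :
    |T m - m * h| ≤ |T k - k * h| + |T l - l * h| + |h| * (l - k) := by
  have hk : (k : ℝ) ≤ m := by exact_mod_cast hkm
  have hl : (m : ℝ) ≤ l := by exact_mod_cast hml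
  have h₁ := hT hkm
  have h₂ := hT hml
  have b₁ : |((m : ℝ) - k) * h| ≤ (l - k) * |h| := by
    rw [abs_mul, abs_of_nonneg (sub_nonneg.2 hk)]; gcongr
  have b₂ : |((l : ℝ) - m) * h| ≤ (l - k) * |h| := by
    rw [abs_mul, abs_of_nonneg (sub_nonneg.2 hl)]; gcongr
  rw [abs_le] at b₁ b₂ ⊢
  constructor <;>
    linarith [neg_abs_le (T k - k * h), le_abs_self (T l - l * h), abs_nonneg (T k - k * h),
      abs_nonneg (T l - l * h)]

theorem isLittleO_natCast_rpow_rpow {a b : ℝ} (hab : a < b) :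
    (fun m : ℕ => (m : ℝ) ^ a) =o[atTop] fun m : ℕ => (m : ℝ) ^ b := by
  refine Asymptotics.isLittleO_of_tendsto' ((eventually_ge_atTop 1).mono fun m hm h => ?_)
    (((tendsto_rpow_neg_atTop (sub_pos.2 hab)).comp tendsto_natCast_atTop_atTop).congr'
      ((eventually_ge_atTop 1).mono fun m hm => ?_))
  · exact absurd h (Real.rpow_pos_of_pos (by exact_mod_cast hm) b).ne'
  · rw [Function.comp_apply, neg_sub, Real.rpow_sub (by exact_mod_cast hm)]

theorem isLittleO_sqrt_add_one_sq_sub_sqrt_sq {s : ℝ} (hs : 1 / 2 < s) :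
    (fun m : ℕ => (((m.sqrt + 1) ^ 2 : ℕ) : ℝ) - ((m.sqrt ^ 2 : ℕ) : ℝ))
      =o[atTop] fun m : ℕ => (m : ℝ) ^ s := by
  refine Asymptotics.IsBigO.trans_isLittleO (g := fun m : ℕ => (m : ℝ) ^ (1 / 2 : ℝ))
    (.of_bound 3 ((eventually_ge_atTop 1).mono fun m hm => ?_))
    (isLittleO_natCast_rpow_rpow hs)
  have h₁ : (m.sqrt : ℝ) ≤ √m := Real.nat_sqrt_le_real_sqrt
  have h₂ : (1 : ℝ) ≤ m.sqrt := by exact_mod_cast Nat.le_sqrt'.2 (by simpa using hm)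
  rw [← Real.sqrt_eq_rpow, Real.norm_of_nonneg (Real.sqrt_nonneg _),
    Real.norm_of_nonneg (by push_cast; nlinarith)]
  push_cast
  linarith

theorem isLittleO_sub_mul_of_monotone_of_sq {T : ℕ → ℝ} (hT : Monotone T) {h s : ℝ} (hs : 1 / 2 < s)
    (hsq : (fun k : ℕ => T (k ^ 2) - ((k ^ 2 : ℕ) : ℝ) * h)
      =o[atTop] fun k : ℕ => ((k ^ 2 : ℕ) : ℝ) ^ s) :
    (fun m : ℕ => T m - m * h) =o[atTop] fun m : ℕ => (m : ℝ) ^ s := by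
  have hs0 : 0 ≤ s := by linarith
  have h_below : (fun m : ℕ => T (m.sqrt ^ 2) - ((m.sqrt ^ 2 : ℕ) : ℝ) * h)
      =o[atTop] fun m : ℕ => (m : ℝ) ^ s := by
    refine (hsq.comp_tendsto tendsto_nat_sqrt_atTop).trans_isBigO (.of_bound 1 (.of_forall ?_))
    intro m
    have : ((m.sqrt ^ 2 : ℕ) : ℝ) ≤ m := by exact_mod_cast m.sqrt_le'
    rw [Function.comp_apply, Real.norm_of_nonneg (by positivity),
      Real.norm_of_nonneg (by positivity), one_mul]
    gcongr
  have h_above : (fun m : ℕ => T ((m.sqrt + 1) ^ 2) - (((m.sqrt + 1) ^ 2 : ℕ) : ℝ) * h)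
      =o[atTop] fun m : ℕ => (m : ℝ) ^ s := by
    refine (hsq.comp_tendsto ((tendsto_add_atTop_nat 1).comp tendsto_nat_sqrt_atTop)).trans_isBigO
      (.of_bound (4 ^ s) ((eventually_ge_atTop 1).mono fun m hm => ?_))
    have : (((m.sqrt + 1) ^ 2 : ℕ) : ℝ) ≤ 4 * m := by
      have h₁ := m.sqrt_le'
      have h₂ : 1 ≤ m.sqrt := Nat.le_sqrt'.2 (by simpa using hm)
      exact_mod_cast (by nlinarith : (m.sqrt + 1) ^ 2 ≤ 4 * m)
    simp only [Function.comp_apply]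
    rw [Real.norm_of_nonneg (by positivity), Real.norm_of_nonneg (by positivity),
      ← Real.mul_rpow (by norm_num) (Nat.cast_nonneg m)]
    gcongr
  refine Asymptotics.IsBigO.trans_isLittleO (.of_bound 1 (.of_forall fun m => ?_))
    ((h_below.norm_left.add h_above.norm_left).add
      ((isLittleO_sqrt_add_one_sq_sub_sqrt_sq hs).const_mul_left |h|))
  rw [one_mul]
  exact (abs_sub_mul_le_of_monotone hT h m.sqrt_le' m.lt_succ_sqrt'.le).trans (le_abs_self _)

theorem tendsto_rpow_mul_average_sub {S : ℕ → ℝ} {h γ : ℝ} (hγ : γ < 1)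
    (hS : (fun m : ℕ => S m - m * h) =o[atTop] fun m : ℕ => (m : ℝ) ^ (1 - γ)) :
    Tendsto (fun n : ℕ => (n : ℝ) ^ γ * ((n : ℝ)⁻¹ * S (n + 1) - h)) atTop (𝓝 0) := by
  have h_shift : (fun n : ℕ => S (n + 1) - ((n + 1 : ℕ) : ℝ) * h)
      =o[atTop] fun n : ℕ => (n : ℝ) ^ (1 - γ) := by
    refine (hS.comp_tendsto (tendsto_add_atTop_nat 1)).trans_isBigO
      (.of_bound (2 ^ (1 - γ)) ((eventually_ge_atTop 1).mono fun n hn => ?_))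
    have hn' : (1 : ℝ) ≤ n := by exact_mod_cast hn
    simp only [Function.comp_apply]
    rw [Real.norm_of_nonneg (by positivity), Real.norm_of_nonneg (by positivity),
      ← Real.mul_rpow (by norm_num) (Nat.cast_nonneg n)]
    refine Real.rpow_le_rpow (by positivity) ?_ (by linarith)
    push_cast
    linarith
  have h_const : (fun _ : ℕ => h) =o[atTop] fun n : ℕ => (n : ℝ) ^ (1 - γ) :=
    (Asymptotics.isLittleO_const_left.2 <| .inr <| tendsto_norm_atTop_atTop.comp <|
      (tendsto_rpow_atTop (by linarith)).comp tendsto_natCast_atTop_atTop)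
  refine (h_shift.add h_const).tendsto_div_nhds_zero.congr'
    ((eventually_ge_atTop 1).mono fun n hn => ?_)
  have hn0 : (0 : ℝ) < n := by exact_mod_cast hn
  rw [Real.rpow_sub hn0, Real.rpow_one]
  have := (Real.rpow_pos_of_pos hn0 γ).ne'
  push_cast
  field_simp
  ring

theorem sum_Icc_pow_sub_le {c : ℝ} (hc0 : 0 ≤ c) (hc1 : c < 1) (m : ℕ) :
    ∑ i ∈ Finset.Icc 1 m, c ^ (m - i) ≤ (1 - c)⁻¹ := by
  rw [← tsum_geometric_of_lt_one hc0 hc1]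
  have h_inj : Set.InjOn (fun i => m - i) (Finset.Icc 1 m : Finset ℕ) := fun i hi j hj h => by
    simp only [Finset.coe_Icc, Set.mem_Icc] at hi hj h
    omega
  rw [← Finset.sum_image (f := fun k => c ^ k) h_inj]
  exact (summable_geometric_of_lt_one hc0 hc1).sum_le_tsum _ fun k _ => pow_nonneg hc0 k

section Probability

variable {Ω : Type*} {mΩ : MeasurableSpace Ω} {P : Measure Ω}

theorem ae_tendsto_zero_of_summable_integral {W : ℕ → Ω → ℝ} (hW : ∀ k, Integrable (W k) P)
    (hW0 : ∀ k, 0 ≤ W k) (h_sum : Summable fun k => ∫ ω, W k ω ∂P) :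
    ∀ᵐ ω ∂P, Tendsto (fun k => W k ω) atTop (𝓝 0) := by
  have h_meas (k : ℕ) : AEMeasurable (fun ω => ENNReal.ofReal (W k ω)) P :=
    (hW k).aemeasurable.ennreal_ofReal
  have h_fin : ∫⁻ ω, ∑' k, ENNReal.ofReal (W k ω) ∂P ≠ ⊤ := by
    rw [lintegral_tsum h_meas]
    simpa only [ofReal_integral_eq_lintegral_ofReal (hW _) (ae_of_all _ (hW0 _))]
      using h_sum.tsum_ofReal_ne_top
  filter_upwards [ae_lt_top' (AEMeasurable.tsum h_meas) h_fin] with ω hω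
  have := (ENNReal.tendsto_toReal ENNReal.zero_ne_top).comp
    (ENNReal.tendsto_atTop_zero_of_tsum_ne_top hω.ne)
  simpa [Function.comp_def, ENNReal.toReal_ofReal (hW0 _ ω)] using this

theorem ae_isLittleO_sub_integral_of_summable_variance [IsFiniteMeasure P] {S : ℕ → Ω → ℝ}
    (hS : ∀ k, MemLp (S k) 2 P) {b : ℕ → ℝ} (hb : ∀ᶠ k in atTop, b k ≠ 0)
    (h_sum : Summable fun k => Var[S k; P] / b k ^ 2) :
    ∀ᵐ ω ∂P, (fun k => S k ω - P[S k]) =o[atTop] b := by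
  have h_int (k : ℕ) : Integrable (fun ω => ((S k ω - P[S k]) / b k) ^ 2) P := by
    simp only [div_pow]
    exact ((hS k).sub (memLp_const _)).integrable_sq.div_const (b k ^ 2)
  have h_expect (k : ℕ) : ∫ ω, ((S k ω - P[S k]) / b k) ^ 2 ∂P = Var[S k; P] / b k ^ 2 := by
    simp only [div_pow]
    rw [integral_div, variance_eq_integral (hS k).aemeasurable]
  filter_upwards [ae_tendsto_zero_of_summable_integral h_int (fun k ω => sq_nonneg _)
    (by simpa only [h_expect] using h_sum)] with ω hω
  refine Asymptotics.isLittleO_of_tendsto' (hb.mono fun k hk h => absurd h hk) ?_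
  have := hω.sqrt
  simp only [Real.sqrt_sq_eq_abs, Real.sqrt_zero] at this
  exact (tendsto_zero_iff_abs_tendsto_zero _).2 this

variable [IsProbabilityMeasure P]

theorem variance_sum_Icc_le {X : ℕ → Ω → ℝ} {L c : ℝ} (hc0 : 0 ≤ c) (hc1 : c < 1) (m : ℕ)
    (hX : ∀ i, MemLp (X i) 2 P)
    (hcov : ∀ i j, 1 ≤ i → i ≤ j → j ≤ m → cov[X i, X j; P] ≤ L * c ^ (j - i)) :
    Var[∑ i ∈ Finset.Icc 1 m, X i; P] ≤ m * (2 * L * (1 - c)⁻¹) := by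
  induction m with
  | zero => simp
  | succ m ih =>
    have ih' := ih fun i j hi hij hj => hcov i j hi hij (hj.trans m.le_succ)
    have h_var : Var[X (m + 1); P] ≤ L := by
      simpa [covariance_self (hX (m + 1)).aemeasurable] using
        hcov (m + 1) (m + 1) (by omega) le_rfl le_rfl
    have hL : 0 ≤ L := (variance_nonneg _ _).trans h_var
    have h_cov : cov[∑ i ∈ Finset.Icc 1 m, X i, X (m + 1); P]
        ≤ L * ∑ i ∈ Finset.Icc 1 m, c ^ (m + 1 - i) := by
      rw [covariance_sum_left' (fun i _ => hX i) (hX _), Finset.mul_sum]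
      refine Finset.sum_le_sum fun i hi => ?_
      rw [Finset.mem_Icc] at hi
      exact hcov i (m + 1) hi.1 (by omega) le_rfl
    have h_geom : L * (∑ i ∈ Finset.Icc 1 m, c ^ (m + 1 - i) + 1) ≤ L * (1 - c)⁻¹ := by
      have := sum_Icc_pow_sub_le hc0 hc1 (m + 1)
      rw [Finset.sum_Icc_succ_top (by omega), Nat.sub_self, pow_zero] at this
      gcongr
    rw [Finset.sum_Icc_succ_top (by omega),
      variance_add (memLp_finsetSum' _ fun i _ => hX i) (hX _)]
    push_cast
    linarith

theorem variance_sum_Icc_le_rpow {Y : ℕ → Ω → ℝ} {L a c : ℝ} (hL : 0 ≤ L) (ha : 0 ≤ a)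
    (hc0 : 0 ≤ c) (hc1 : c < 1) (hY : ∀ j, MemLp (Y j) 2 P)
    (hcov : ∀ i j : ℕ, 1 ≤ i → i ≤ j →
      cov[Y i, Y j; P] ≤ L * (i : ℝ) ^ a * (j : ℝ) ^ a * c ^ (j - i)) (m : ℕ) :
    Var[∑ i ∈ Finset.Icc 1 m, Y i; P] ≤ 2 * L * (1 - c)⁻¹ * (m * ((m : ℝ) ^ a) ^ 2) := by
  have h := variance_sum_Icc_le (L := L * ((m : ℝ) ^ a) ^ 2) hc0 hc1 m hY
    fun i j hi hij hj => (hcov i j hi hij).trans ?_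
  · exact h.trans_eq (by ring)
  · have h₁ : (i : ℝ) ≤ m := by exact_mod_cast hij.trans hj
    have h₂ : (j : ℝ) ≤ m := by exact_mod_cast hj
    rw [mul_assoc L, sq]
    gcongr

theorem summable_variance_sum_Icc_sq_div {Y : ℕ → Ω → ℝ} {L a c s : ℝ} (hL : 0 ≤ L)
    (ha : 0 ≤ a) (hc0 : 0 ≤ c) (hc1 : c < 1) (hY : ∀ j, MemLp (Y j) 2 P)
    (hcov : ∀ i j : ℕ, 1 ≤ i → i ≤ j →
      cov[Y i, Y j; P] ≤ L * (i : ℝ) ^ a * (j : ℝ) ^ a * c ^ (j - i)) (hs : 3 / 4 + a < s) :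
    Summable fun k : ℕ =>
      Var[∑ j ∈ Finset.Icc 1 (k ^ 2), Y j; P] / (((k ^ 2 : ℕ) : ℝ) ^ s) ^ 2 := by
  refine Summable.of_norm_bounded_eventually_nat
    ((Real.summable_nat_rpow.2 (by linarith : 2 + 4 * a - 4 * s < -1)).mul_left
      (2 * L * (1 - c)⁻¹)) ((eventually_ge_atTop 1).mono fun k hk => ?_)
  have hk0 : (0 : ℝ) < k := by exact_mod_cast hk
  have h_exp : ((k ^ 2 : ℕ) : ℝ) * (((k ^ 2 : ℕ) : ℝ) ^ a) ^ 2 / (((k ^ 2 : ℕ) : ℝ) ^ s) ^ 2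
      = (k : ℝ) ^ (2 + 4 * a - 4 * s) := by
    push_cast
    simp only [← Real.rpow_natCast, ← Real.rpow_mul hk0.le, ← Real.rpow_add hk0,
      ← Real.rpow_sub hk0]
    congr 1
    push_cast
    ring
  rw [Real.norm_of_nonneg (div_nonneg (variance_nonneg _ _) (sq_nonneg _)), ← h_exp,
    ← mul_div_assoc]
  gcongr
  exact variance_sum_Icc_le_rpow hL ha hc0 hc1 hY hcov _

theorem ae_isLittleO_sum_sub_of_covariance_le {Y : ℕ → Ω → ℝ} {L a c h s : ℝ} (hL : 0 ≤ L)
    (ha : 0 ≤ a) (hc0 : 0 ≤ c) (hc1 : c < 1) (hY : ∀ j, MemLp (Y j) 2 P) (hY0 : ∀ j, 0 ≤ Y j)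
    (hcov : ∀ i j : ℕ, 1 ≤ i → i ≤ j →
      cov[Y i, Y j; P] ≤ L * (i : ℝ) ^ a * (j : ℝ) ^ a * c ^ (j - i))
    (hs : 3 / 4 + a < s) (h_bias : Summable fun j : ℕ => |P[Y j] - h| * (j : ℝ) ^ (-s)) :
    ∀ᵐ ω ∂P, (fun m : ℕ => ∑ j ∈ Finset.Icc 1 m, Y j ω - m * h)
      =o[atTop] fun m : ℕ => (m : ℝ) ^ s := by
  have h_mean (m : ℕ) : ∫ ω, ∑ j ∈ Finset.Icc 1 m, Y j ω ∂P
      = ∑ j ∈ Finset.Icc 1 m, ∫ ω, Y j ω ∂P :=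
    integral_finsetSum _ fun j _ => (hY j).integrable one_le_two
  have h_drift := (isLittleO_sum_Icc_of_summable (by linarith) h_bias).comp_tendsto
    (tendsto_pow_atTop two_ne_zero)
  filter_upwards [ae_isLittleO_sub_integral_of_summable_variance
    (S := fun k => ∑ j ∈ Finset.Icc 1 (k ^ 2), Y j) (fun k => memLp_finsetSum' _ fun j _ => hY j)
    ((eventually_ge_atTop 1).mono fun k hk => by positivity)
    (summable_variance_sum_Icc_sq_div hL ha hc0 hc1 hY hcov hs)] with ω h_fluct
  refine isLittleO_sub_mul_of_monotone_of_sq (fun m n hmn => ?_) (by linarith)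
    ((h_fluct.add h_drift).congr_left fun k => ?_)
  · exact Finset.sum_le_sum_of_subset_of_nonneg (Finset.Icc_subset_Icc_right hmn)
      fun j _ _ => hY0 j ω
  · simp only [h_mean, Finset.sum_apply, Function.comp_apply, Finset.sum_sub_distrib,
      Finset.sum_const, Nat.card_Icc, add_tsub_cancel_right, nsmul_eq_mul]
    ring

end Probability

section SmoothingKernel

variable {W : Type*} [NormedAddCommGroup W] [MeasurableSpace W]

/-- Smoothing kernels for density estimation: nonnegative functions bounded by `M` and supported in
the ball of radius `δ`, of total mass one with respect to the reference measure `ν`. -/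
structure IsSmoothingKernel (ν : Measure W) (K : W → ℝ) (M δ : ℝ) : Prop where
  measurable : Measurable K
  nonneg : ∀ z, 0 ≤ K z
  le : ∀ z, K z ≤ M
  integral_eq_one : ∫ z, K z ∂ν = 1
  support_subset : Function.support K ⊆ Metric.ball 0 δ

/-- The kernel `K` at bandwidth `w` centred at `z`, namely `u ↦ w⁻ᴰ K ((u - z) / w)` with `D` the
dimension of `W`: the summand of a kernel density estimator of the density at `z`. -/
noncomputable def rescale {W : Type*} [AddCommGroup W] [Module ℝ W] (K : W → ℝ)
    (w : ℝ) (z u : W) : ℝ :=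
  (w ^ Module.finrank ℝ W)⁻¹ * K (w⁻¹ • (u - z))

theorem rescale_prod_mul {V V' : Type*} [AddCommGroup V] [Module ℝ V] [Module.Finite ℝ V]
    [AddCommGroup V'] [Module ℝ V'] [Module.Finite ℝ V'] (K : V → ℝ) (K' : V' → ℝ) (w : ℝ)
    (x : V) (y : V') (u : V) (v : V') :
    rescale (fun z : V × V' => K z.1 * K' z.2) w (x, y) (u, v) =
      (w ^ (Module.finrank ℝ V + Module.finrank ℝ V'))⁻¹
        * (K (w⁻¹ • (u - x)) * K' (w⁻¹ • (v - y))) := by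
  rw [rescale, Module.finrank_prod]
  rfl

namespace IsSmoothingKernel

variable {ν : Measure W} {K : W → ℝ} {M δ w : ℝ}

theorem bound_pos (hK : IsSmoothingKernel ν K M δ) : 0 < M := by
  refine ((hK.nonneg 0).trans (hK.le 0)).lt_of_ne fun hM => ?_
  have h_zero (z : W) : K z = 0 := le_antisymm (hM ▸ hK.le z) (hK.nonneg z)
  simpa [h_zero] using hK.integral_eq_one

theorem prod {W' : Type*} [NormedAddCommGroup W'] [MeasurableSpace W'] {ν' : Measure W'}
    {K' : W' → ℝ} {M' : ℝ} [SFinite ν] [SFinite ν'] (hK : IsSmoothingKernel ν K M δ)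
    (hK' : IsSmoothingKernel ν' K' M' δ) :
    IsSmoothingKernel (ν.prod ν') (fun u => K u.1 * K' u.2) (M * M') δ where
  measurable := (hK.measurable.comp measurable_fst).mul (hK'.measurable.comp measurable_snd)
  nonneg u := mul_nonneg (hK.nonneg _) (hK'.nonneg _)
  le u := mul_le_mul (hK.le _) (hK'.le _) (hK'.nonneg _) hK.bound_pos.le
  integral_eq_one := by
    rw [integral_prod_mul, hK.integral_eq_one, hK'.integral_eq_one, one_mul]
  support_subset u hu := by
    rw [Function.mem_support, mul_ne_zero_iff] at hu
    rw [Prod.zero_eq_mk, ← ball_prod_same]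
    exact ⟨hK.support_subset hu.1, hK'.support_subset hu.2⟩

variable [NormedSpace ℝ W]

theorem rescale_nonneg (hK : IsSmoothingKernel ν K M δ) (hw : 0 ≤ w) (z u : W) :
    0 ≤ rescale K w z u :=
  mul_nonneg (inv_nonneg.2 (pow_nonneg hw _)) (hK.nonneg _)

theorem rescale_le (hK : IsSmoothingKernel ν K M δ) (hw : 0 ≤ w) (z u : W) :
    rescale K w z u ≤ (w ^ Module.finrank ℝ W)⁻¹ * M :=
  mul_le_mul_of_nonneg_left (hK.le _) (inv_nonneg.2 (pow_nonneg hw _))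

theorem mem_ball_of_rescale_ne_zero (hK : IsSmoothingKernel ν K M δ) (hw : 0 < w) {z u : W}
    (hu : rescale K w z u ≠ 0) : u ∈ Metric.ball z (w * δ) := by
  have h_mem := hK.support_subset (right_ne_zero_of_mul hu)
  rwa [mem_ball_zero_iff, norm_smul, norm_inv, Real.norm_of_nonneg hw.le, inv_mul_lt_iff₀ hw,
    ← mem_ball_iff_norm] at h_mem

theorem setIntegral_ball_rescale (hK : IsSmoothingKernel ν K M δ) (hw : 0 < w) (z : W)
    (μ : Measure W) :
    ∫ u in Metric.ball z (w * δ), rescale K w z u ∂μ = ∫ u, rescale K w z u ∂μ :=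
  setIntegral_eq_integral_of_forall_compl_eq_zero fun _ hu =>
    by_contra fun h => hu (hK.mem_ball_of_rescale_ne_zero hw h)

variable [BorelSpace W]

theorem measurable_rescale (hK : IsSmoothingKernel ν K M δ) (w : ℝ) (z : W) :
    Measurable (rescale K w z) :=
  (hK.measurable.comp ((measurable_id.sub_const z).const_smul w⁻¹)).const_mul _

variable [FiniteDimensional ℝ W] [ν.IsAddHaarMeasure]

theorem integral_rescale (hK : IsSmoothingKernel ν K M δ) (hw : 0 < w) (z : W) :
    ∫ u, rescale K w z u ∂ν = 1 := by
  simp only [rescale]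
  rw [integral_const_mul, integral_sub_right_eq_self (fun u => K (w⁻¹ • u)),
    Measure.integral_comp_inv_smul_of_nonneg _ _ hw.le, hK.integral_eq_one, smul_eq_mul, mul_one,
    inv_mul_cancel₀ (pow_pos hw _).ne']

theorem abs_integral_rescale_sub_le (hK : IsSmoothingKernel ν K M δ) (hw : 0 < w) {z : W}
    {μ : Measure W} {f : W → ℝ} (hf : Measurable f) (hf0 : ∀ u, 0 ≤ f u)
    (hμ : μ.restrict (Metric.ball z (w * δ)) =
      (ν.restrict (Metric.ball z (w * δ))).withDensity fun u => ENNReal.ofReal (f u))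
    {h C : ℝ} (hfh : ∀ u ∈ Metric.ball z (w * δ), |f u - h| ≤ C) :
    |∫ u, rescale K w z u ∂μ - h| ≤ C := by
  have h_const (b : ℝ) : ∫ u in Metric.ball z (w * δ), b * rescale K w z u ∂ν = b := by
    rw [integral_const_mul, hK.setIntegral_ball_rescale hw, hK.integral_rescale hw, mul_one]
  have h_int (b : ℝ) : IntegrableOn (fun u => b * rescale K w z u) (Metric.ball z (w * δ)) ν :=
    ((integrable_of_integral_eq_one (hK.integral_rescale hw z)).const_mul b).integrableOn
  have h_le : ∀ᵐ u ∂ν.restrict (Metric.ball z (w * δ)),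
      ‖(f u - h) * rescale K w z u‖ ≤ C * rescale K w z u := by
    filter_upwards [ae_restrict_mem measurableSet_ball] with u hu
    rw [norm_mul, Real.norm_of_nonneg (hK.rescale_nonneg hw.le z u)]
    exact mul_le_mul_of_nonneg_right (hfh u hu) (hK.rescale_nonneg hw.le z u)
  have h_int_sub : IntegrableOn (fun u => (f u - h) * rescale K w z u) (Metric.ball z (w * δ)) ν :=
    (h_int C).mono' ((hf.sub_const h).mul (hK.measurable_rescale w z)).aestronglyMeasurable h_le
  have h_eq : ∫ u, rescale K w z u ∂μ
      = ∫ u in Metric.ball z (w * δ), (f u - h) * rescale K w z u ∂ν + h := by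
    calc ∫ u, rescale K w z u ∂μ
        = ∫ u in Metric.ball z (w * δ), f u * rescale K w z u ∂ν := by
          rw [← hK.setIntegral_ball_rescale hw z μ, hμ,
            integral_withDensity_eq_integral_toReal_smul hf.ennreal_ofReal
              (ae_of_all _ fun _ => ENNReal.ofReal_lt_top)]
          simp only [ENNReal.toReal_ofReal (hf0 _), smul_eq_mul]
      _ = ∫ u in Metric.ball z (w * δ), ((f u - h) * rescale K w z u + h * rescale K w z u) ∂ν := by
          simp only [sub_mul, sub_add_cancel]
      _ = _ := by rw [integral_add h_int_sub (h_int h), h_const]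
  rw [h_eq, add_sub_cancel_right, ← h_const C]
  exact norm_integral_le_of_norm_le (h_int C) h_le

end IsSmoothingKernel

end SmoothingKernel

section Covariance

variable {Ω : Type*} {mΩ : MeasurableSpace Ω} {P : Measure Ω} {S : Type*} [MeasurableSpace S]

/-- Geometric decay of covariances for a sequence observed from time `1` on: test functions bounded
by one, evaluated at times `m ≤ n`, have covariance at most `L * c ^ (n - m)`. -/
def HasGeometricCovDecay (P : Measure Ω) (ζ : ℕ → Ω → S) (L c : ℝ) : Prop :=
  ∀ g h : S → ℝ, Measurable g → Measurable h → (∀ u, |g u| ≤ 1) → (∀ u, |h u| ≤ 1) →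
    ∀ m n : ℕ, 1 ≤ m → m ≤ n →
      |cov[fun ω => g (ζ m ω), fun ω => h (ζ n ω); P]| ≤ L * c ^ (n - m)

theorem hasGeometricCovDecay_of_abs_integral_mul_sub_le [IsProbabilityMeasure P]
    {ζ : ℕ → Ω → S} (hζ : ∀ n, Measurable (ζ n)) {B b : ℝ} (hB : 0 ≤ B) (hb : 1 ≤ b)
    (h : ∀ g h : S → ℝ, Measurable g → Measurable h → (∀ u, |g u| ≤ 1) → (∀ u, |h u| ≤ 1) →
      ∀ m n : ℕ, 1 ≤ m → m ≤ n →
        |∫ ω, g (ζ m ω) * h (ζ n ω) ∂P - (∫ ω, g (ζ m ω) ∂P) * ∫ ω, h (ζ n ω) ∂P|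
          ≤ B * b ^ (-((n : ℝ) - m)) * (1 + b ^ (-(m : ℝ)))) :
    HasGeometricCovDecay P ζ (2 * B) b⁻¹ := by
  intro g₁ g₂ hg₁ hg₂ hg₁1 hg₂1 m n hm hmn
  have h_memLp {g : S → ℝ} (hg : Measurable g) (hg1 : ∀ u, |g u| ≤ 1) (j : ℕ) :
      MemLp (fun ω => g (ζ j ω)) 2 P :=
    .of_bound (hg.comp (hζ j)).aestronglyMeasurable 1 (ae_of_all _ fun ω => hg1 _)
  have h_pow : b ^ (-((n : ℝ) - m)) = b⁻¹ ^ (n - m) := by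
    rw [Real.rpow_neg (by linarith), ← Nat.cast_sub hmn, Real.rpow_natCast, inv_pow]
  have h_le_one : b ^ (-(m : ℝ)) ≤ 1 := Real.rpow_le_one_of_one_le_of_nonpos hb (by simp)
  rw [covariance_eq_sub (h_memLp hg₁ hg₁1 m) (h_memLp hg₂ hg₂1 n)]
  calc _ ≤ B * b ^ (-((n : ℝ) - m)) * (1 + b ^ (-(m : ℝ))) := h g₁ g₂ hg₁ hg₂ hg₁1 hg₂1 m n hm hmn
    _ ≤ B * b ^ (-((n : ℝ) - m)) * 2 := by gcongr; linarith
    _ = 2 * B * b⁻¹ ^ (n - m) := by rw [h_pow]; ring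

theorem HasGeometricCovDecay.bound_nonneg {ζ : ℕ → Ω → S} {L c : ℝ}
    (hζ : HasGeometricCovDecay P ζ L c) : 0 ≤ L := by
  simpa using (abs_nonneg _).trans
    (hζ 0 0 measurable_const measurable_const (by simp) (by simp) 1 1 le_rfl le_rfl)

theorem HasGeometricCovDecay.covariance_const_mul_le {ζ : ℕ → Ω → S} {L c : ℝ}
    (hζ : HasGeometricCovDecay P ζ L c) {G : ℕ → S → ℝ} (hG : ∀ j, Measurable (G j)) {M : ℝ}
    (hGM : ∀ j u, |G j u| ≤ M) (hM : 0 < M) {b : ℕ → ℝ} (hb : ∀ j, 0 ≤ b j) {m n : ℕ}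
    (hm : 1 ≤ m) (hmn : m ≤ n) :
    cov[fun ω => b m * G m (ζ m ω), fun ω => b n * G n (ζ n ω); P]
      ≤ L * M ^ 2 * b m * b n * c ^ (n - m) := by
  have h_unit (j : ℕ) (u : S) : |G j u / M| ≤ 1 := by
    rw [abs_div, abs_of_pos hM, div_le_one hM]
    exact hGM j u
  have h_cov := (le_abs_self _).trans (hζ _ _ ((hG m).div_const M) ((hG n).div_const M)
    (h_unit m) (h_unit n) m n hm hmn)
  have h_mul (j : ℕ) (ω : Ω) : b j * G j (ζ j ω) = b j * M * (G j (ζ j ω) / M) := by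
    field_simp
  simp only [h_mul]
  rw [covariance_const_mul_left, covariance_const_mul_right]
  have := hb m
  have := hb n
  calc b m * M * (b n * M * cov[fun ω => G m (ζ m ω) / M, fun ω => G n (ζ n ω) / M; P])
      ≤ b m * M * (b n * M * (L * c ^ (n - m))) := by gcongr
    _ = L * M ^ 2 * b m * b n * c ^ (n - m) := by ring

end Covariance

section RecursiveKDE

variable {Ω : Type*} {mΩ : MeasurableSpace Ω} {P : Measure Ω}
  {W : Type*} [NormedAddCommGroup W] [NormedSpace ℝ W]

/-- The recursive kernel density estimator at `z` built on the observations `ζ 1, ζ 2, …` with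
bandwidths `w 1, w 2, …`. As in the paper, it has `n + 1` summands but is normalised by `n`. -/
noncomputable def recursiveKDE (K : W → ℝ) (w : ℕ → ℝ) (ζ : ℕ → Ω → W) (z : W) (n : ℕ)
    (ω : Ω) : ℝ :=
  (n : ℝ)⁻¹ * ∑ j ∈ Finset.Icc 1 (n + 1), rescale K (w j) z (ζ j ω)

variable [MeasurableSpace W] [BorelSpace W]

theorem ae_tendsto_rpow_mul_recursiveKDE_sub [IsProbabilityMeasure P] {ν : Measure W}
    {K : W → ℝ} {M δ : ℝ} (hK : IsSmoothingKernel ν K M δ) {ζ : ℕ → Ω → W}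
    (hζ : ∀ j, Measurable (ζ j)) {L c : ℝ} (hc0 : 0 ≤ c) (hc1 : c < 1)
    (hcov : HasGeometricCovDecay P ζ L c) {w : ℕ → ℝ} {w₁ β : ℝ} (hw₁ : 0 < w₁) (hβ : 0 ≤ β)
    (hw : ∀ j : ℕ, w j = w₁ * (j : ℝ) ^ (-β)) {γ : ℝ} (hγ : γ < 1 / 4 - β * Module.finrank ℝ W)
    {z : W} {h : ℝ} (h_bias : Summable fun j : ℕ =>
      |∫ ω, rescale K (w j) z (ζ j ω) ∂P - h| * (j : ℝ) ^ (-(1 - γ))) :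
    ∀ᵐ ω ∂P, Tendsto (fun n : ℕ => (n : ℝ) ^ γ * (recursiveKDE K w ζ z n ω - h)) atTop (𝓝 0) := by
  have hw0 (j : ℕ) : 0 ≤ w j := by rw [hw]; positivity
  have h_scale (j : ℕ) : (w j ^ Module.finrank ℝ W)⁻¹
      = (w₁ ^ Module.finrank ℝ W)⁻¹ * (j : ℝ) ^ (β * Module.finrank ℝ W) := by
    rw [hw, mul_pow, mul_inv, ← Real.rpow_natCast ((j : ℝ) ^ (-β)), ← Real.rpow_mul (by positivity),
      ← Real.rpow_neg (by positivity), neg_mul, neg_neg]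
  have h_memLp (j : ℕ) : MemLp (fun ω => rescale K (w j) z (ζ j ω)) 2 P := by
    refine .of_bound ((hK.measurable_rescale (w j) z).comp (hζ j)).aestronglyMeasurable
      ((w j ^ Module.finrank ℝ W)⁻¹ * M) (ae_of_all _ fun ω => ?_)
    rw [Real.norm_of_nonneg (hK.rescale_nonneg (hw0 j) z _)]
    exact hK.rescale_le (hw0 j) z _
  have h_cov (i j : ℕ) (hi : 1 ≤ i) (hij : i ≤ j) :
      cov[fun ω => rescale K (w i) z (ζ i ω), fun ω => rescale K (w j) z (ζ j ω); P]
        ≤ L * M ^ 2 * ((w₁ ^ Module.finrank ℝ W)⁻¹) ^ 2 * (i : ℝ) ^ (β * Module.finrank ℝ W)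
          * (j : ℝ) ^ (β * Module.finrank ℝ W) * c ^ (j - i) := by
    refine (hcov.covariance_const_mul_le (G := fun j u => K ((w j)⁻¹ • (u - z)))
      (b := fun j => (w j ^ Module.finrank ℝ W)⁻¹)
      (fun j => hK.measurable.comp ((measurable_id.sub_const z).const_smul (w j)⁻¹))
      (fun j u => (abs_of_nonneg (hK.nonneg _)).trans_le (hK.le _)) hK.bound_pos
      (fun j => inv_nonneg.2 (pow_nonneg (hw0 j) _)) hi hij).trans_eq ?_
    simp only [h_scale]
    ring
  have hL := hcov.bound_nonneg
  have ha : 0 ≤ β * Module.finrank ℝ W := by positivity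
  filter_upwards [ae_isLittleO_sum_sub_of_covariance_le (by positivity) ha hc0 hc1 h_memLp
    (fun j ω => hK.rescale_nonneg (hw0 j) z _) h_cov (by linarith) h_bias] with ω hω
  exact tendsto_rpow_mul_average_sub (S := fun m => ∑ j ∈ Finset.Icc 1 m, rescale K (w j) z (ζ j ω))
    (by linarith) hω

end RecursiveKDE

section MarkovChain

variable {Ω S T : Type*} {F mΩ : MeasurableSpace Ω} {P : Measure Ω} [MeasurableSpace S]
  [MeasurableSpace T]

theorem hasCondDistrib_of_condExp_comp [IsFiniteMeasure P] (hF : F ≤ mΩ) {X : Ω → S}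
    {Y : Ω → T} (hX : Measurable[F] X) (hY : Measurable Y) {κ : Kernel S T}
    [IsMarkovKernel κ]
    (h : ∀ g : T → ℝ, Measurable g → (∃ C, ∀ u, |g u| ≤ C) →
      P[fun ω => g (Y ω)|F] =ᵐ[P] fun ω => ∫ u, g u ∂κ (X ω)) :
    HasCondDistrib Y X κ P := by
  have hX' : Measurable X := hX.mono hF le_rfl
  refine ⟨(hX'.prodMk hY).aemeasurable, Measure.ext_prod fun {A B} hA hB => ?_⟩
  have h_cond : P[fun ω => B.indicator (1 : T → ℝ) (Y ω)|F] =ᵐ[P] fun ω => (κ (X ω)).real B := by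
    refine (h _ (measurable_one.indicator hB) ⟨1, fun u => ?_⟩).trans (ae_of_all _ fun ω => ?_)
    · by_cases hu : u ∈ B <;> simp [hu]
    · exact integral_indicator_one hB
  have h_int : Integrable (fun ω => B.indicator (1 : T → ℝ) (Y ω)) P :=
    (integrable_const (1 : ℝ)).indicator (hY hB)
  have h_real : P.real (X ⁻¹' A ∩ Y ⁻¹' B) = ∫ ω in X ⁻¹' A, (κ (X ω)).real B ∂P := by
    calc P.real (X ⁻¹' A ∩ Y ⁻¹' B)
        = ∫ ω in X ⁻¹' A, B.indicator (1 : T → ℝ) (Y ω) ∂P := by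
          rw [Set.inter_comm, ← measureReal_restrict_apply (hY hB),
            ← integral_indicator_one (hY hB)]
          rfl
      _ = ∫ ω in X ⁻¹' A, P[fun ω => B.indicator (1 : T → ℝ) (Y ω)|F] ω ∂P :=
          (setIntegral_condExp hF h_int (hX hA)).symm
      _ = _ := integral_congr_ae (ae_restrict_of_ae h_cond)
  have h_meas : Measurable fun ω => κ (X ω) B := (κ.measurable_coe hB).comp hX'
  rw [Measure.map_apply (hX'.prodMk hY) (hA.prod hB), Measure.compProd_apply_prod hA hB,
    setLIntegral_map hA (κ.measurable_coe hB) hX', Set.mk_preimage_prod,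
    ← ofReal_measureReal, h_real, ofReal_integral_eq_lintegral_ofReal]
  · simp only [ofReal_measureReal (μ := κ (X _)) (measure_ne_top _ _)]
  · exact Integrable.of_bound h_meas.ennreal_toReal.aestronglyMeasurable 1
      (ae_of_all _ fun ω => by
        rw [Real.norm_of_nonneg measureReal_nonneg]; exact measureReal_le_one)
  · exact ae_of_all _ fun ω => measureReal_nonneg

theorem measurable_iSup_comap_succ (X : ℕ → Ω → S) {n : ℕ} (hn : 1 ≤ n) :
    Measurable[⨆ i : Fin n, MeasurableSpace.comap (X (i.1 + 1)) inferInstance] (X n) := by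
  obtain ⟨k, rfl⟩ := Nat.exists_eq_add_of_le' hn
  exact Measurable.of_comap_le (le_iSup_of_le (Fin.last k) le_rfl)

theorem hasCondDistrib_succ_of_condExp_comp [IsFiniteMeasure P] {X : ℕ → Ω → S}
    (hX : ∀ n, Measurable (X n)) {R : Kernel S S} [IsMarkovKernel R] {n : ℕ} (hn : 1 ≤ n)
    (h : ∀ g : S → ℝ, Measurable g → (∃ C, ∀ u, |g u| ≤ C) →
      P[fun ω => g (X (n + 1) ω)|⨆ i : Fin n, MeasurableSpace.comap (X (i.1 + 1)) inferInstance]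
        =ᵐ[P] fun ω => ∫ u, g u ∂(R (X n ω))) :
    HasCondDistrib (X (n + 1)) (X n) R P :=
  hasCondDistrib_of_condExp_comp (iSup_le fun _ => (hX _).comap_le)
    (measurable_iSup_comap_succ X hn) (hX _) h

theorem hasCondDistrib_of_condExp_comp_sup [IsFiniteMeasure P] {X : ℕ → Ω → S}
    (hX : ∀ n, Measurable (X n)) {Z : ℕ → Ω → T} (hZ : ∀ n, Measurable (Z n)) {Q : Kernel S T}
    [IsMarkovKernel Q] {n : ℕ} (hn : 1 ≤ n)
    (h : ∀ g : T → ℝ, Measurable g → (∃ C, ∀ u, |g u| ≤ C) →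
      P[fun ω => g (Z n ω)|(⨆ i : Fin n, MeasurableSpace.comap (X (i.1 + 1)) inferInstance) ⊔
          ⨆ i : Fin (n - 1), MeasurableSpace.comap (Z (i.1 + 1)) inferInstance]
        =ᵐ[P] fun ω => ∫ u, g u ∂(Q (X n ω))) :
    HasCondDistrib (Z n) (X n) Q P :=
  hasCondDistrib_of_condExp_comp
    (sup_le (iSup_le fun _ => (hX _).comap_le) (iSup_le fun _ => (hZ _).comap_le))
    ((measurable_iSup_comap_succ X hn).mono le_sup_left le_rfl) (hZ n) h

theorem map_eq_comp_of_hasCondDistrib [SFinite P] {X : Ω → S} {Y : Ω → T} {κ : Kernel S T}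
    [IsSFiniteKernel κ] (h : HasCondDistrib Y X κ P) : P.map Y = κ ∘ₘ P.map X := by
  rw [← Measure.snd_compProd, ← h.map_eq, Measure.snd_map_prodMk₀ h.aemeasurable_fst]

theorem iterK_eq_pow (R : Kernel S S) (n : ℕ) (ξ : S) : iterK R n ξ = (R ^ n) ξ := by
  induction n with
  | zero => exact (Kernel.id_apply ξ).symm
  | succ n ih => rw [pow_succ']; exact congrArg (·.bind R) ih

theorem isMarkovKernel_pow (R : Kernel S S) [IsMarkovKernel R] (n : ℕ) :
    IsMarkovKernel (R ^ n) := by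
  induction n with
  | zero => exact inferInstanceAs (IsMarkovKernel Kernel.id)
  | succ n ih => exact inferInstanceAs (IsMarkovKernel ((R ^ n) ∘ₖ R))

theorem map_eq_pow_comp_of_hasCondDistrib [SFinite P] {X : ℕ → Ω → S} {R : Kernel S S}
    [IsSFiniteKernel R] (h : ∀ n, 1 ≤ n → HasCondDistrib (X (n + 1)) (X n) R P) (n : ℕ) :
    P.map (X (n + 1)) = (R ^ n) ∘ₘ P.map (X 1) := by
  induction n with
  | zero => exact Measure.id_comp.symm
  | succ n ih =>
    rw [map_eq_comp_of_hasCondDistrib (h (n + 1) (by omega)), ih, pow_succ']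
    exact Measure.comp_assoc

theorem abs_integral_sub_integral_le_of_abs_measureReal_sub_le {μ μ' : Measure S}
    [IsProbabilityMeasure μ] [IsProbabilityMeasure μ'] {f : S → ℝ} (hf : Measurable f)
    (hf0 : ∀ u, 0 ≤ f u) {C t : ℝ} (hC : 0 ≤ C) (hfC : ∀ u, f u ≤ C)
    (h : ∀ B, MeasurableSet B → |μ.real B - μ'.real B| ≤ t) :
    |∫ u, f u ∂μ - ∫ u, f u ∂μ'| ≤ C * t := by
  have h_layer (η : Measure S) [IsProbabilityMeasure η] :
      ∫ u, f u ∂η = ∫ s in Set.Ioc 0 C, η.real {u | s ≤ f u} :=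
    (Integrable.of_bound hf.aestronglyMeasurable C (ae_of_all _ fun u => by
      rw [Real.norm_of_nonneg (hf0 u)]; exact hfC u)).integral_eq_integral_Ioc_meas_le
      (ae_of_all _ hf0) (ae_of_all _ hfC)
  have h_int (η : Measure S) [IsProbabilityMeasure η] :
      IntegrableOn (fun s => η.real {u | s ≤ f u}) (Set.Ioc 0 C) := by
    have h_anti : Antitone fun s => η.real {u | s ≤ f u} := fun s s' hs =>
      measureReal_mono fun u (hu : s' ≤ f u) => hs.trans hu
    exact Integrable.of_bound h_anti.measurable.aestronglyMeasurable 1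
      (ae_of_all _ fun s => by
        rw [Real.norm_of_nonneg measureReal_nonneg]; exact measureReal_le_one)
  rw [h_layer μ, h_layer μ', ← integral_sub (h_int μ) (h_int μ')]
  have h_bound := norm_setIntegral_le_of_norm_le_const (μ := volume) (s := Set.Ioc 0 C)
    (f := fun s => μ.real {u | s ≤ f u} - μ'.real {u | s ≤ f u}) (by simp)
    fun s _ => h _ (measurableSet_le measurable_const hf)
  rwa [Real.volume_real_Ioc_of_le hC, sub_zero, mul_comm] at h_bound

theorem abs_measureReal_comp_sub_le {κ : Kernel S T} [IsMarkovKernel κ] {m : Measure S}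
    [IsProbabilityMeasure m] {B : Set T} (hB : MeasurableSet B) {a t : ℝ}
    (h : ∀ᵐ ξ ∂m, |(κ ξ).real B - a| ≤ t) : |(κ ∘ₘ m).real B - a| ≤ t := by
  have h_meas : Measurable fun ξ => κ ξ B := κ.measurable_coe hB
  have h_int : Integrable (fun ξ => (κ ξ).real B) m :=
    Integrable.of_bound h_meas.ennreal_toReal.aestronglyMeasurable 1 (ae_of_all _ fun ξ => by
      rw [Real.norm_of_nonneg measureReal_nonneg]; exact measureReal_le_one)
  have h_eq : (κ ∘ₘ m).real B = ∫ ξ, (κ ξ).real B ∂m := by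
    rw [measureReal_def, Measure.bind_apply hB κ.aemeasurable]
    exact (integral_toReal h_meas.aemeasurable (ae_of_all _ fun ξ => measure_lt_top _ _)).symm
  have h_sub : ∫ ξ, ((κ ξ).real B - a) ∂m = ∫ ξ, (κ ξ).real B ∂m - a := by
    simp [integral_sub h_int (integrable_const a)]
  rw [h_eq, ← h_sub]
  simpa using norm_integral_le_of_norm_le_const (f := fun ξ => (κ ξ).real B - a) h

/-- Geometric ergodicity of the Markov kernel `R` started in `A`: after `n ≥ 1` steps its law is
within `D * θ ^ n` of `π`, uniformly over starting points in `A` and over measurable sets. -/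
def IsGeometricallyErgodicOn (R : Kernel S S) (π : Measure S) (A : Set S) (D θ : ℝ) : Prop :=
  ∀ n : ℕ, 1 ≤ n → ∀ ξ ∈ A, ∀ B, MeasurableSet B →
    |((R ^ n) ξ).real B - π.real B| ≤ D * θ ^ n

theorem isGeometricallyErgodicOn_of_abs_iterK_sub_le {R : Kernel S S} {π : Measure S}
    {A : Set S} {D ρ : ℝ} (hρ : 0 ≤ ρ)
    (h : ∀ n : ℕ, 1 ≤ n → ∀ ξ ∈ A, ∀ B, MeasurableSet B →
      |(iterK R n ξ B).toReal - (π B).toReal| ≤ D * ρ ^ (-(n : ℝ))) :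
    IsGeometricallyErgodicOn R π A D ρ⁻¹ := fun n hn ξ hξ B hB => by
  simpa only [iterK_eq_pow, measureReal_def, Real.rpow_neg hρ, Real.rpow_natCast, inv_pow]
    using h n hn ξ hξ B hB

theorem IsGeometricallyErgodicOn.abs_integral_pow_comp_sub_le {R : Kernel S S} [IsMarkovKernel R]
    {π m : Measure S} [IsProbabilityMeasure π] [IsProbabilityMeasure m] {A : Set S} {D θ : ℝ}
    (hR : IsGeometricallyErgodicOn R π A D θ) (hm : ∀ᵐ ξ ∂m, ξ ∈ A) {f : S → ℝ}
    (hf : Measurable f) (hf0 : ∀ u, 0 ≤ f u) {C : ℝ} (hC : 0 ≤ C) (hfC : ∀ u, f u ≤ C) {n : ℕ}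
    (hn : 1 ≤ n) : |∫ u, f u ∂((R ^ n) ∘ₘ m) - ∫ u, f u ∂π| ≤ C * (D * θ ^ n) :=
  have := isMarkovKernel_pow R n
  abs_integral_sub_integral_le_of_abs_measureReal_sub_le hf hf0 hC hfC fun B hB =>
    abs_measureReal_comp_sub_le hB (hm.mono fun ξ hξ => hR n hn ξ hξ B hB)

end MarkovChain

section Density

variable {S V : Type*} [MeasurableSpace S] [MeasurableSpace V] [PseudoMetricSpace V]

theorem restrict_eq_withDensity_of_forall_subset {m ν : Measure S} {E : Set S}
    (hE : MeasurableSet E) {f : S → ENNReal}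
    (h : ∀ B ⊆ E, MeasurableSet B → m B = ∫⁻ u in B, f u ∂ν) :
    m.restrict E = (ν.restrict E).withDensity f := by
  ext B hB
  rw [Measure.restrict_apply hB, withDensity_apply _ hB, Measure.restrict_restrict hB]
  exact h _ Set.inter_subset_right (hB.inter hE)

theorem measurable_of_eq_withDensity {T : Type*} [MeasurableSpace T] {ν : Measure T} [SFinite ν]
    {Q : S → Measure T} {q : S → T → ENNReal} (hq : Measurable (Function.uncurry q))
    (hQ : ∀ a, Q a = ν.withDensity (q a)) : Measurable Q := by
  have h_eq : Q = (Kernel.const S ν).withDensity q := by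
    ext1 a
    rw [Kernel.withDensity_apply _ hq, hQ, Kernel.const_apply]
  exact h_eq ▸ Kernel.measurable _

/-- Transition densities `f ξ` on `V`, bounded by `C` and Lipschitz on `U` with constant `L`, both
uniformly in the starting point `ξ`. Their total mass is left unconstrained. -/
structure IsBoundedLipschitzDensity (f : S → V → ℝ) (U : Set V) (C : ℝ) (L : NNReal) : Prop where
  measurable : Measurable (Function.uncurry f)
  nonneg : ∀ ξ u, 0 ≤ f ξ u
  le : ∀ ξ u, f ξ u ≤ C
  lipschitzOnWith : ∀ ξ, LipschitzOnWith L (f ξ) U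

namespace IsBoundedLipschitzDensity

variable {f : S → V → ℝ} {U : Set V} {C : ℝ} {L : NNReal} {m : Measure S}

theorem measurable_left (hf : IsBoundedLipschitzDensity f U C L) (u : V) :
    Measurable fun ξ => f ξ u :=
  hf.measurable.of_uncurry_right

theorem integrable_left [IsFiniteMeasure m] (hf : IsBoundedLipschitzDensity f U C L) (u : V) :
    Integrable (fun ξ => f ξ u) m :=
  .of_bound (hf.measurable_left u).aestronglyMeasurable C (ae_of_all _ fun ξ => by
    rw [Real.norm_of_nonneg (hf.nonneg ξ u)]; exact hf.le ξ u)

theorem measurable_integral [SFinite m] (hf : IsBoundedLipschitzDensity f U C L) :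
    Measurable fun u => ∫ ξ, f ξ u ∂m :=
  hf.measurable.stronglyMeasurable.integral_prod_left'.measurable

theorem integral_nonneg (hf : IsBoundedLipschitzDensity f U C L) (u : V) : 0 ≤ ∫ ξ, f ξ u ∂m :=
  MeasureTheory.integral_nonneg fun ξ => hf.nonneg ξ u

variable [IsProbabilityMeasure m]

theorem integral_le (hf : IsBoundedLipschitzDensity f U C L) (u : V) : ∫ ξ, f ξ u ∂m ≤ C := by
  simpa using integral_mono (hf.integrable_left (m := m) u) (integrable_const C) fun ξ => hf.le ξ u

theorem lipschitzOnWith_integral (hf : IsBoundedLipschitzDensity f U C L) :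
    LipschitzOnWith L (fun u => ∫ ξ, f ξ u ∂m) U := by
  refine .of_dist_le_mul fun u hu u' hu' => ?_
  rw [dist_eq_norm, ← integral_sub (hf.integrable_left u) (hf.integrable_left u')]
  simpa using norm_integral_le_of_norm_le_const (f := fun ξ => f ξ u - f ξ u')
    (ae_of_all m fun ξ => (hf.lipschitzOnWith ξ).dist_le_mul u hu u' hu')

theorem restrict_comp_eq_withDensity {ν : Measure V} [SFinite ν]
    (hf : IsBoundedLipschitzDensity f U C L) {R : Kernel S V} {A : Set V} (hA : MeasurableSet A)
    (hR : ∀ᵐ ξ ∂m, (R ξ).restrict A =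
      (ν.restrict A).withDensity fun u => ENNReal.ofReal (f ξ u)) :
    (R ∘ₘ m).restrict A =
      (ν.restrict A).withDensity fun u => ENNReal.ofReal (∫ ξ, f ξ u ∂m) := by
  ext B hB
  calc (R ∘ₘ m).restrict A B
      = ∫⁻ ξ, (R ξ).restrict A B ∂m := by
        simp only [Measure.restrict_apply hB]
        exact Measure.bind_apply (hB.inter hA) R.aemeasurable
    _ = ∫⁻ ξ, ∫⁻ u in B, ENNReal.ofReal (f ξ u) ∂ν.restrict A ∂m :=
        lintegral_congr_ae (hR.mono fun ξ hξ => by simp only [hξ, withDensity_apply _ hB])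
    _ = ∫⁻ u in B, ∫⁻ ξ, ENNReal.ofReal (f ξ u) ∂m ∂ν.restrict A :=
        lintegral_lintegral_swap hf.measurable.ennreal_ofReal.aemeasurable
    _ = ∫⁻ u in B, ENNReal.ofReal (∫ ξ, f ξ u ∂m) ∂ν.restrict A :=
        lintegral_congr fun u => (ofReal_integral_eq_lintegral_ofReal (hf.integrable_left u)
          (ae_of_all _ fun ξ => hf.nonneg ξ u)).symm
    _ = _ := (withDensity_apply _ hB).symm

end IsBoundedLipschitzDensity

theorem IsBoundedLipschitzDensity.abs_mul_sub_mul_le {q : V → V → ℝ} {Cq : ℝ} {L₁ L₂ : NNReal}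
    (hq : IsBoundedLipschitzDensity q Set.univ Cq L₁) (hqL : ∀ b, LipschitzWith L₂ fun a => q a b)
    {f : V → ℝ} {U : Set V} {Cf t : ℝ} {Lf : NNReal} (hf0 : ∀ u, 0 ≤ f u) (hfC : ∀ u, f u ≤ Cf)
    (hfL : LipschitzOnWith Lf f U) {x y u v : V} (hx : x ∈ U) (hu : u ∈ U)
    (hux : dist u x ≤ t) (hvy : dist v y ≤ t) :
    |f u * q u v - f x * q x y| ≤ (Cq * Lf + Cf * (L₁ + L₂)) * t := by
  have hCf : 0 ≤ Cf := (hf0 x).trans (hfC x)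
  have h_f : |f u - f x| ≤ Lf * t := (hfL.dist_le_mul u hu x hx).trans (by gcongr)
  have h_q₁ : |q u v - q u y| ≤ L₁ * t :=
    ((hq.lipschitzOnWith u).dist_le_mul v trivial y trivial).trans (by gcongr)
  have h_q₂ : |q u y - q x y| ≤ L₂ * t := ((hqL y).dist_le_mul u x).trans (by gcongr)
  calc |f u * q u v - f x * q x y|
      = |q u v * (f u - f x) + f x * ((q u v - q u y) + (q u y - q x y))| := by ring_nf
    _ ≤ q u v * |f u - f x| + f x * (|q u v - q u y| + |q u y - q x y|) := by
        refine (abs_add_le _ _).trans ?_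
        rw [abs_mul, abs_mul, abs_of_nonneg (hq.nonneg u v), abs_of_nonneg (hf0 x)]
        gcongr
        · exact hf0 x
        · exact abs_add_le _ _
    _ ≤ Cq * (Lf * t) + Cf * (L₁ * t + L₂ * t) := by
        gcongr
        · exact (hq.nonneg u v).trans (hq.le u v)
        · exact hq.le u v
        · exact hfC x
    _ = (Cq * Lf + Cf * (L₁ + L₂)) * t := by ring

theorem restrict_compProd_withDensity_eq {T : Type*} [MeasurableSpace T] {m ν : Measure S}
    [SFinite m] [SFinite ν] {ν' : Measure T} [SFinite ν'] {A : Set S} (hA : MeasurableSet A)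
    {f : S → ℝ} (hf : Measurable f) (hf0 : ∀ a, 0 ≤ f a) {q : S → T → ℝ}
    (hq : Measurable (Function.uncurry q)) {Q : Kernel S T} [IsSFiniteKernel Q]
    (hQ : ∀ a, Q a = ν'.withDensity fun b => ENNReal.ofReal (q a b))
    (hm : m.restrict A = (ν.restrict A).withDensity fun a => ENNReal.ofReal (f a)) :
    (m ⊗ₘ Q).restrict (A ×ˢ Set.univ) =
      ((ν.prod ν').restrict (A ×ˢ Set.univ)).withDensity fun u =>
        ENNReal.ofReal (f u.1 * q u.1 u.2) := by
  have hq' : Measurable (Function.uncurry fun a b => ENNReal.ofReal (q a b)) := hq.ennreal_ofReal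
  obtain rfl : Q = (Kernel.const S ν').withDensity fun a b => ENNReal.ofReal (q a b) := by
    ext1 a
    rw [Kernel.withDensity_apply _ hq', hQ, Kernel.const_apply]
  have hA' : MeasurableSet (A ×ˢ (Set.univ : Set T)) := hA.prod .univ
  rw [Measure.compProd_withDensity hq', Measure.compProd_const, restrict_withDensity hA',
    ← Measure.prod_restrict, Measure.restrict_univ, hm, prod_withDensity_left hf.ennreal_ofReal,
    ← Measure.prod_restrict, Measure.restrict_univ]
  simp only [ENNReal.ofReal_mul (hf0 _)]
  exact (withDensity_mul _ (by fun_prop) hq').symm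

end Density

theorem eventually_ball_subset_of_rpow {V : Type*} [PseudoMetricSpace V] {E : Set V}
    (hE : IsOpen E) {x : V} (hx : x ∈ E) {w : ℕ → ℝ} {w₁ β δ : ℝ} (hβ : 0 < β)
    (hw : ∀ j : ℕ, w j = w₁ * (j : ℝ) ^ (-β)) :
    ∀ᶠ j : ℕ in atTop, Metric.ball x (w j * δ) ⊆ E := by
  obtain ⟨η, hη, hηE⟩ := Metric.isOpen_iff.1 hE x hx
  have h_tendsto : Tendsto (fun j => w j * δ) atTop (𝓝 0) := by
    simpa [hw] using
      (((tendsto_rpow_neg_atTop hβ).comp tendsto_natCast_atTop_atTop).const_mul w₁).mul_const δ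
  filter_upwards [h_tendsto.eventually_lt_const hη] with j hj
  exact (Metric.ball_subset_ball hj.le).trans hηE

section Bias

variable {Ω : Type*} {mΩ : MeasurableSpace Ω} {P : Measure Ω}
  {V : Type*} [NormedAddCommGroup V] [NormedSpace ℝ V] [FiniteDimensional ℝ V]
  [MeasurableSpace V] [BorelSpace V] {ν : Measure V} [ν.IsAddHaarMeasure]

theorem IsSmoothingKernel.abs_integral_rescale_prod_sub_le [SFinite P] {K : V → ℝ} {M δ w : ℝ}
    (hK : IsSmoothingKernel ν K M δ) (hw : 0 < w) {U : Set V} (hU : MeasurableSet U) {x y : V}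
    (hx : x ∈ U) (hxU : Metric.ball x (w * δ) ⊆ U) {X Y : Ω → V} {Q : Kernel V V}
    [IsSFiniteKernel Q] (hXY : HasCondDistrib Y X Q P) {f : V → ℝ} {Cf : ℝ} {Lf : NNReal}
    (hf : Measurable f) (hf0 : ∀ u, 0 ≤ f u) (hfC : ∀ u, f u ≤ Cf) (hfL : LipschitzOnWith Lf f U)
    (hX : (P.map X).restrict U = (ν.restrict U).withDensity fun u => ENNReal.ofReal (f u))
    {q : V → V → ℝ} {Cq : ℝ} {L₁ L₂ : NNReal} (hq : IsBoundedLipschitzDensity q Set.univ Cq L₁)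
    (hqL : ∀ b, LipschitzWith L₂ fun a => q a b)
    (hQ : ∀ a, Q a = ν.withDensity fun b => ENNReal.ofReal (q a b)) :
    |∫ ω, rescale (fun u : V × V => K u.1 * K u.2) w (x, y) (X ω, Y ω) ∂P - f x * q x y|
      ≤ (Cq * Lf + Cf * (L₁ + L₂)) * (w * δ) := by
  have hB : Metric.ball (x, y) (w * δ) ⊆ U ×ˢ Set.univ := by
    rw [← ball_prod_same]
    exact Set.prod_mono hxU (Set.subset_univ _)
  have h_dens : Measurable fun u : V × V => f u.1 * q u.1 u.2 :=
    (hf.comp measurable_fst).mul hq.measurable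
  have h_law : (P.map fun ω => (X ω, Y ω)).restrict (Metric.ball (x, y) (w * δ)) =
      ((ν.prod ν).restrict (Metric.ball (x, y) (w * δ))).withDensity
        fun u => ENNReal.ofReal (f u.1 * q u.1 u.2) := by
    rw [hXY.map_eq, ← Measure.restrict_restrict_of_subset hB,
      restrict_compProd_withDensity_eq hU hf hf0 hq.measurable hQ hX,
      restrict_withDensity measurableSet_ball, Measure.restrict_restrict_of_subset hB]
  rw [← integral_map (hXY.aemeasurable_fst.prodMk hXY.aemeasurable_snd)
    ((hK.prod hK).measurable_rescale w (x, y)).aestronglyMeasurable]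
  refine (hK.prod hK).abs_integral_rescale_sub_le hw h_dens
    (fun u => mul_nonneg (hf0 _) (hq.nonneg _ _)) h_law fun u hu => ?_
  obtain ⟨hux, hvy⟩ := max_lt_iff.1 (Metric.mem_ball.1 hu)
  exact hq.abs_mul_sub_mul_le hqL hf0 hfC hfL hx (hB hu).1 hux.le hvy.le

theorem summable_abs_mul_rpow_of_le_rpow_add {b g : ℕ → ℝ} {A β γ : ℝ} (hg : Summable g)
    (hg0 : ∀ j, 0 ≤ g j) (hγβ : γ < β) (hγ : γ ≤ 1)
    (hb : ∀ᶠ j : ℕ in atTop, |b j| ≤ A * (j : ℝ) ^ (-β) + g j) :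
    Summable fun j : ℕ => |b j| * (j : ℝ) ^ (-(1 - γ)) := by
  have h_rpow : Summable fun j : ℕ => A * (j : ℝ) ^ (-(1 + (β - γ))) :=
    (Real.summable_nat_rpow.2 (by linarith)).mul_left A
  refine .of_norm_bounded_eventually_nat (h_rpow.add hg) ?_
  filter_upwards [hb, eventually_ge_atTop 1] with j hj hj1
  have hj1' : (1 : ℝ) ≤ j := mod_cast hj1
  rw [Real.norm_of_nonneg (by positivity)]
  calc |b j| * (j : ℝ) ^ (-(1 - γ)) ≤ (A * (j : ℝ) ^ (-β) + g j) * (j : ℝ) ^ (-(1 - γ)) := by gcongr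
    _ = A * ((j : ℝ) ^ (-β) * (j : ℝ) ^ (-(1 - γ))) + g j * (j : ℝ) ^ (-(1 - γ)) := by ring
    _ = A * (j : ℝ) ^ (-(1 + (β - γ))) + g j * (j : ℝ) ^ (-(1 - γ)) := by
        rw [← Real.rpow_add (by linarith)]
        ring_nf
    _ ≤ A * (j : ℝ) ^ (-(1 + (β - γ))) + g j := by
        gcongr
        exact mul_le_of_le_one_right (hg0 j)
          (Real.rpow_le_one_of_one_le_of_nonpos hj1' (by linarith))

end Bias

section MarkovChainBias

variable {Ω : Type*} {mΩ : MeasurableSpace Ω} {P : Measure Ω} [IsProbabilityMeasure P]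
  {V : Type*} [NormedAddCommGroup V] [NormedSpace ℝ V] [FiniteDimensional ℝ V]
  [MeasurableSpace V] [BorelSpace V] {ν : Measure V} [ν.IsAddHaarMeasure]
  {E A : Set V} {X Z : ℕ → Ω → V} {R Q : Kernel V V} [IsMarkovKernel R] [IsSFiniteKernel Q]
  {π : Measure V} [IsProbabilityMeasure π] {r q : V → V → ℝ} {Cr Cq D θ : ℝ} {Lr L₁ L₂ : NNReal}
  {K : V → ℝ} {M δ : ℝ}

theorem abs_integral_rescale_markovChain_sub_le {w : ℝ} (hK : IsSmoothingKernel ν K M δ)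
    (hw : 0 < w) (hE : MeasurableSet E) {x y : V} (hx : x ∈ E) (hxE : Metric.ball x (w * δ) ⊆ E)
    (hA : MeasurableSet A) (hXA : ∀ n, 1 ≤ n → ∀ᵐ ω ∂P, X n ω ∈ A)
    (hXR : ∀ n, 1 ≤ n → HasCondDistrib (X (n + 1)) (X n) R P)
    (hR : IsGeometricallyErgodicOn R π A D θ) (hr : IsBoundedLipschitzDensity r E Cr Lr)
    (hRr : ∀ ξ ∈ A, (R ξ).restrict E =
      (ν.restrict E).withDensity fun u => ENNReal.ofReal (r ξ u)) {n : ℕ} (hn : 1 ≤ n)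
    {Y : Ω → V} (hXY : HasCondDistrib Y (X (n + 2)) Q P)
    (hq : IsBoundedLipschitzDensity q Set.univ Cq L₁) (hqL : ∀ b, LipschitzWith L₂ fun a => q a b)
    (hQ : ∀ a, Q a = ν.withDensity fun b => ENNReal.ofReal (q a b)) :
    |∫ ω, rescale (fun u : V × V => K u.1 * K u.2) w (x, y) (X (n + 2) ω, Y ω) ∂P
        - (∫ ξ, r ξ x ∂π) * q x y|
      ≤ (Cq * Lr + Cr * (L₁ + L₂)) * (w * δ) + Cr * Cq * (D * θ ^ n) := by
  have hX (j : ℕ) (hj : 1 ≤ j) : AEMeasurable (X j) P := (hXR j hj).aemeasurable_fst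
  have h_prob (j : ℕ) (hj : 1 ≤ j) : IsProbabilityMeasure (P.map (X j)) :=
    Measure.isProbabilityMeasure_map (hX j hj)
  have := h_prob 1 le_rfl
  have := h_prob (n + 1) (by omega)
  have h_mem (j : ℕ) (hj : 1 ≤ j) : ∀ᵐ ξ ∂P.map (X j), ξ ∈ A :=
    (ae_map_iff (hX j hj) hA).2 (hXA j hj)
  have h_dens : (P.map (X (n + 2))).restrict E = (ν.restrict E).withDensity
      fun u => ENNReal.ofReal (∫ ξ, r ξ u ∂P.map (X (n + 1))) := by
    rw [map_eq_comp_of_hasCondDistrib (hXR (n + 1) (by omega))]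
    exact hr.restrict_comp_eq_withDensity hE ((h_mem _ (by omega)).mono hRr)
  have h_local := hK.abs_integral_rescale_prod_sub_le hw hE (y := y) hx hxE hXY
    hr.measurable_integral hr.integral_nonneg hr.integral_le hr.lipschitzOnWith_integral h_dens
    hq hqL hQ
  have h_ergodic : |∫ ξ, r ξ x ∂P.map (X (n + 1)) - ∫ ξ, r ξ x ∂π| ≤ Cr * (D * θ ^ n) := by
    rw [map_eq_pow_comp_of_hasCondDistrib hXR]
    exact hR.abs_integral_pow_comp_sub_le (h_mem 1 le_rfl) (hr.measurable_left x)
      (hr.nonneg · x) ((hr.nonneg x x).trans (hr.le x x)) (hr.le · x) hn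
  refine (abs_sub_le _ _ _).trans (add_le_add h_local ?_)
  rw [← sub_mul, abs_mul, abs_of_nonneg (hq.nonneg x y)]
  calc _ ≤ Cr * (D * θ ^ n) * Cq :=
        mul_le_mul h_ergodic (hq.le x y) (hq.nonneg x y) ((abs_nonneg _).trans h_ergodic)
    _ = _ := by ring

theorem summable_abs_integral_rescale_markovChain_sub_mul_rpow (hE : IsOpen E)
    (hA : MeasurableSet A) (hXA : ∀ n, 1 ≤ n → ∀ᵐ ω ∂P, X n ω ∈ A)
    (hXR : ∀ n, 1 ≤ n → HasCondDistrib (X (n + 1)) (X n) R P) (hθ0 : 0 ≤ θ) (hθ1 : θ < 1)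
    (hR : IsGeometricallyErgodicOn R π A D θ) (hr : IsBoundedLipschitzDensity r E Cr Lr)
    (hRr : ∀ ξ ∈ A, (R ξ).restrict E =
      (ν.restrict E).withDensity fun u => ENNReal.ofReal (r ξ u))
    (hXZ : ∀ n, 1 ≤ n → HasCondDistrib (Z n) (X n) Q P)
    (hq : IsBoundedLipschitzDensity q Set.univ Cq L₁) (hqL : ∀ b, LipschitzWith L₂ fun a => q a b)
    (hQ : ∀ a, Q a = ν.withDensity fun b => ENNReal.ofReal (q a b))
    (hK : IsSmoothingKernel ν K M δ) {w : ℕ → ℝ} {w₁ β γ : ℝ} (hw₁ : 0 < w₁) (hβ : 0 < β)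
    (hw : ∀ j : ℕ, w j = w₁ * (j : ℝ) ^ (-β)) (hγβ : γ < β) (hγ : γ ≤ 1) {x : V} (hx : x ∈ E)
    (y : V) :
    Summable fun j : ℕ =>
      |∫ ω, rescale (fun u : V × V => K u.1 * K u.2) (w j) (x, y) (X j ω, Z j ω) ∂P
        - (∫ ξ, r ξ x ∂π) * q x y| * (j : ℝ) ^ (-(1 - γ)) := by
  have h_ball := eventually_ball_subset_of_rpow hE hx hβ hw (δ := δ)
  have h_geom : Summable fun j : ℕ => |Cr * Cq * D| * θ ^ (j - 2) :=
    .mul_left _ ((summable_nat_add_iff 2).1 (by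
      simpa only [Nat.add_sub_cancel] using summable_geometric_of_lt_one hθ0 hθ1))
  refine summable_abs_mul_rpow_of_le_rpow_add h_geom (fun j => by positivity) hγβ hγ
    (A := (Cq * Lr + Cr * (L₁ + L₂)) * (w₁ * δ)) ?_
  filter_upwards [h_ball, eventually_ge_atTop 3] with j hj hj3
  have hwj : 0 < w j := by rw [hw]; positivity
  obtain ⟨n, rfl⟩ : ∃ n, j = n + 2 := ⟨j - 2, by omega⟩
  have h_bound := abs_integral_rescale_markovChain_sub_le hK hwj hE.measurableSet hx hj hA hXA hXR
    hR hr hRr (n := n) (by omega) (hXZ _ (by omega)) hq hqL hQ (y := y)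
  have h_geom_le : Cr * Cq * (D * θ ^ n) ≤ |Cr * Cq * D| * θ ^ n := by
    rw [← mul_assoc]
    exact mul_le_mul_of_nonneg_right (le_abs_self _) (pow_nonneg hθ0 n)
  have h_local : (Cq * Lr + Cr * (L₁ + L₂)) * (w (n + 2) * δ)
      = (Cq * Lr + Cr * (L₁ + L₂)) * (w₁ * δ) * ((n + 2 : ℕ) : ℝ) ^ (-β) := by
    rw [hw]
    ring
  exact h_bound.trans (add_le_add h_local.le h_geom_le)

theorem stmt5_general (hE : IsOpen E) (hA : MeasurableSet A) (hX : ∀ n, Measurable (X n))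
    (hXA : ∀ n, 1 ≤ n → ∀ᵐ ω ∂P, X n ω ∈ A)
    (hXR : ∀ n, 1 ≤ n → HasCondDistrib (X (n + 1)) (X n) R P) (hθ0 : 0 ≤ θ) (hθ1 : θ < 1)
    (hR : IsGeometricallyErgodicOn R π A D θ) (hr : IsBoundedLipschitzDensity r E Cr Lr)
    (hRr : ∀ ξ ∈ A, (R ξ).restrict E =
      (ν.restrict E).withDensity fun u => ENNReal.ofReal (r ξ u))
    (hZ : ∀ n, Measurable (Z n)) (hXZ : ∀ n, 1 ≤ n → HasCondDistrib (Z n) (X n) Q P)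
    (hq : IsBoundedLipschitzDensity q Set.univ Cq L₁) (hqL : ∀ b, LipschitzWith L₂ fun a => q a b)
    (hQ : ∀ a, Q a = ν.withDensity fun b => ENNReal.ofReal (q a b))
    {L c : ℝ} (hc0 : 0 ≤ c) (hc1 : c < 1)
    (hcov : HasGeometricCovDecay P (fun n ω => (X n ω, Z n ω)) L c)
    (hK : IsSmoothingKernel ν K M δ) {w : ℕ → ℝ} {w₁ β γ : ℝ} (hw₁ : 0 < w₁) (hβ : 0 < β)
    (hw : ∀ j : ℕ, w j = w₁ * (j : ℝ) ^ (-β)) (hγβ : γ < β)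
    (hγ : γ < 1 / 4 - 2 * β * Module.finrank ℝ V) {x : V} (hx : x ∈ E) (y : V) :
    ∀ᵐ ω ∂P, Tendsto (fun n : ℕ => (n : ℝ) ^ γ *
      (recursiveKDE (fun u : V × V => K u.1 * K u.2) w (fun n ω => (X n ω, Z n ω)) (x, y) n ω
        - (∫ ξ, r ξ x ∂π) * q x y)) atTop (𝓝 0) := by
  have h_dim : γ < 1 / 4 - β * Module.finrank ℝ (V × V) := by
    rw [Module.finrank_prod]
    push_cast
    linarith
  have hγ1 : γ ≤ 1 := by
    have : 0 ≤ 2 * β * Module.finrank ℝ V := by positivity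
    linarith
  exact ae_tendsto_rpow_mul_recursiveKDE_sub (hK.prod hK) (fun j => (hX j).prodMk (hZ j)) hc0 hc1
    hcov hw₁ hβ.le hw h_dim <| summable_abs_integral_rescale_markovChain_sub_mul_rpow hE hA hXA hXR
      hθ0 hθ1 hR hr hRr hXZ hq hqL hQ hK hw₁ hβ hw hγβ hγ1 hx y

end MarkovChainBias

theorem half_sub_lt_quarter_sub_of_lt {d α β : ℝ} (hd : 0 < d)
    (h : 4 * β < α - 1 / (2 * d)) : (1 - α * d) / 2 < 1 / 4 - 2 * β * d := by
  have h_mul : 4 * β * d < (α - 1 / (2 * d)) * d := by gcongr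
  have h_cancel : (α - 1 / (2 * d)) * d = α * d - 1 / 2 := by field_simp
  linarith

theorem stmt5
    {d : ℕ} (hd : 1 ≤ d)
    {Ω : Type*} [MeasurableSpace Ω] (P : Measure Ω) [IsProbabilityMeasure P]
    (E : Set (EuclideanSpace ℝ (Fin d))) (hEopen : IsOpen E) (hEne : E.Nonempty)
    (Zm : ℕ → Ω → (EuclideanSpace ℝ (Fin d))) (hZmmeas : ∀ n, Measurable (Zm n))
    (hZmmem : ∀ n, 1 ≤ n → ∀ ω, Zm n ω ∈ closure E)
    (R : (EuclideanSpace ℝ (Fin d)) → Measure (EuclideanSpace ℝ (Fin d))) (hRprob : ∀ ξ, IsProbabilityMeasure (R ξ))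
    (hRkermeas : ∀ B : Set (EuclideanSpace ℝ (Fin d)), MeasurableSet B → Measurable fun ξ => R ξ B)
    (hMarkov : ∀ n, 1 ≤ n → ∀ g : (EuclideanSpace ℝ (Fin d)) → ℝ, Measurable g → (∃ C, ∀ u, |g u| ≤ C) →
      P[fun ω => g (Zm (n+1) ω)|⨆ i : Fin n, MeasurableSpace.comap (Zm (i.1+1)) inferInstance]
        =ᵐ[P] fun ω => ∫ u, g u ∂(R (Zm n ω)))
    (μ : Measure (EuclideanSpace ℝ (Fin d))) (hμprob : IsProbabilityMeasure μ)
    (ε : ℝ) (hε : 0 < ε) (k : ℕ) (hk : 1 ≤ k)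
    (hDoeblin : ∀ ξ ∈ closure E, ∀ B : Set (EuclideanSpace ℝ (Fin d)), MeasurableSet B →
      ENNReal.ofReal ε * μ B ≤ iterK R k ξ B)
    (π : Measure (EuclideanSpace ℝ (Fin d))) (hπprob : IsProbabilityMeasure π)
    (hπinv : ∀ B : Set (EuclideanSpace ℝ (Fin d)), MeasurableSet B → π B = ∫⁻ ξ, R ξ B ∂π)
    (κ ρ : ℝ) (hκ : 0 < κ) (hρ : 1 < ρ)
    (hTV : ∀ n : ℕ, 1 ≤ n → ∀ ξ ∈ closure E, ∀ B : Set (EuclideanSpace ℝ (Fin d)), MeasurableSet B →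
      |(iterK R n ξ B).toReal - (π B).toReal| ≤ κ * ρ ^ (-(n:ℝ)))
    (r : (EuclideanSpace ℝ (Fin d)) → (EuclideanSpace ℝ (Fin d)) → ℝ) (hrmeas : Measurable (Function.uncurry r)) (hrnonneg : ∀ a b, 0 ≤ r a b)
    (Cr : ℝ) (hrbdd : ∀ a b, r a b ≤ Cr)
    (rLip : ℝ) (hrLip : ∀ a : (EuclideanSpace ℝ (Fin d)), ∀ b ∈ E, ∀ b' ∈ E, |r a b' - r a b| ≤ rLip * dist b' b)
    (hRdens : ∀ ξ ∈ closure E, ∀ B : Set (EuclideanSpace ℝ (Fin d)), B ⊆ E → MeasurableSet B →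
      R ξ B = ∫⁻ z in B, ENNReal.ofReal (r ξ z) ∂volume)
    (p : (EuclideanSpace ℝ (Fin d)) → ℝ) (hp : ∀ z ∈ E, p z = ∫ u, r u z ∂π)
    (K : (EuclideanSpace ℝ (Fin d)) → ℝ) (hKmeas : Measurable K) (hKnonneg : ∀ z, 0 ≤ K z)
    (CK : ℝ) (hKbdd : ∀ z, K z ≤ CK) (hKint : ∫ z, K z ∂volume = 1)
    (δ : ℝ) (hδ : 0 < δ) (hKsupp : Function.support K ⊆ Metric.ball 0 δ)
    (v1 Alpha : ℝ) (hv1 : 0 < v1) (hAlpha : 0 < Alpha)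
    (v : ℕ → ℝ) (hv : ∀ j : ℕ, v j = v1 * (j:ℝ) ^ (-Alpha))
    (Z : ℕ → Ω → (EuclideanSpace ℝ (Fin d))) (hZmeas : ∀ n, Measurable (Z n)) (hZmem : ∀ n, 1 ≤ n → ∀ ω, Z n ω ∈ E)
    (Qm : (EuclideanSpace ℝ (Fin d)) → Measure (EuclideanSpace ℝ (Fin d))) (hQprob : ∀ ξ, IsProbabilityMeasure (Qm ξ))
    (q : (EuclideanSpace ℝ (Fin d)) → (EuclideanSpace ℝ (Fin d)) → ℝ) (hqmeas : Measurable (Function.uncurry q)) (hqnonneg : ∀ a b, 0 ≤ q a b)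
    (Cq : ℝ) (hqbdd : ∀ a b, q a b ≤ Cq)
    (qLip : ℝ) (hqLip1 : ∀ a b b' : (EuclideanSpace ℝ (Fin d)), |q a b' - q a b| ≤ qLip * dist b' b)
    (hqLip2 : ∀ a a' b : (EuclideanSpace ℝ (Fin d)), |q a' b - q a b| ≤ qLip * dist a' a)
    (hQdens : ∀ ξ : (EuclideanSpace ℝ (Fin d)), ∀ B : Set (EuclideanSpace ℝ (Fin d)), MeasurableSet B →
      Qm ξ B = ∫⁻ z in B, ENNReal.ofReal (q ξ z) ∂volume)
    (hZcond : ∀ n, 1 ≤ n → ∀ g : (EuclideanSpace ℝ (Fin d)) → ℝ, Measurable g → (∃ C, ∀ u, |g u| ≤ C) →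
      P[fun ω => g (Z n ω)|(⨆ i : Fin n, MeasurableSpace.comap (Zm (i.1+1)) inferInstance) ⊔
          (⨆ i : Fin (n-1), MeasurableSpace.comap (Z (i.1+1)) inferInstance)]
        =ᵐ[P] fun ω => ∫ u, g u ∂(Qm (Zm n ω)))
    (Bc bc : ℝ) (hBc : 0 < Bc) (hbc : 1 < bc)
    (hcov : ∀ g h : (EuclideanSpace ℝ (Fin d)) → (EuclideanSpace ℝ (Fin d)) → ℝ, Measurable (Function.uncurry g) → Measurable (Function.uncurry h) →
      (∀ a b, |g a b| ≤ 1) → (∀ a b, |h a b| ≤ 1) →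
      ∀ m n : ℕ, 1 ≤ m → m ≤ n →
        |∫ ω, g (Zm m ω) (Z m ω) * h (Zm n ω) (Z n ω) ∂P -
          (∫ ω, g (Zm m ω) (Z m ω) ∂P) * (∫ ω, h (Zm n ω) (Z n ω) ∂P)| ≤
          Bc * bc ^ (-((n:ℝ) - (m:ℝ))) * (1 + bc ^ (-(m:ℝ))))
    (w1 Beta : ℝ) (hw1 : 0 < w1) (hBeta : 0 < Beta)
    (w : ℕ → ℝ) (hw : ∀ j : ℕ, w j = w1 * (j:ℝ) ^ (-Beta))
    (x y : (EuclideanSpace ℝ (Fin d))) (hx : x ∈ E) (hy : y ∈ E)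
    (hxdist : max v1 w1 * δ < Metric.infDist x (frontier E))
    (hydist : w1 * δ < Metric.infDist y (frontier E))
    (hβ1 : 2 * (1 - Alpha * d) < 4 * Beta)
    (hβ2 : 4 * Beta < min (1 / (2 * (d:ℝ))) (Alpha - 1 / (2 * (d:ℝ)))) :
    ∀ᵐ ω ∂P, Tendsto
      (fun n : ℕ => (n:ℝ) ^ ((1 - Alpha * d) / 2) * (((n:ℝ)⁻¹ * ∑ j ∈ Finset.Icc 1 (n+1), ((w j) ^ (2*d))⁻¹ * (K ((w j)⁻¹ • (Zm j ω - x)) * K ((w j)⁻¹ • (Z j ω - y)))) - p x * q x y))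
      atTop (nhds 0) := by
  let R' : Kernel _ _ := ⟨R, Measure.measurable_of_measurable_coe R hRkermeas⟩
  have hQ (ξ) : Qm ξ = volume.withDensity fun z => ENNReal.ofReal (q ξ z) :=
    Measure.ext fun B hB => (hQdens ξ B hB).trans (withDensity_apply _ hB).symm
  let Q' : Kernel _ _ := ⟨Qm, measurable_of_eq_withDensity (q := fun ξ z => .ofReal (q ξ z))
    hqmeas.ennreal_ofReal hQ⟩
  have : IsMarkovKernel R' := ⟨hRprob⟩
  have : IsMarkovKernel Q' := ⟨hQprob⟩
  have h_cov := hasGeometricCovDecay_of_abs_integral_mul_sub_le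
    (fun n => (hZmmeas n).prodMk (hZmeas n)) hBc.le hbc.le fun g h hg hh hg1 hh1 =>
      hcov g.curry h.curry hg hh (fun _ _ => hg1 _) (fun _ _ => hh1 _)
  have hγ := half_sub_lt_quarter_sub_of_lt (Nat.cast_pos.2 hd) (hβ2.trans_le (min_le_right _ _))
  simpa only [recursiveKDE, rescale_prod_mul, finrank_euclideanSpace_fin, ← two_mul, ← hp x hx]
    using stmt5_general (R := R') (Q := Q') hEopen isClosed_closure.measurableSet hZmmeas
      (fun n hn => ae_of_all _ (hZmmem n hn))
      (fun n hn => hasCondDistrib_succ_of_condExp_comp hZmmeas hn (hMarkov n hn))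
      (by positivity) (inv_lt_one_of_one_lt₀ hρ)
      (isGeometricallyErgodicOn_of_abs_iterK_sub_le (by positivity) hTV)
      ⟨hrmeas, hrnonneg, hrbdd, fun a => .of_dist_le' fun b hb b' hb' => hrLip a b' hb' b hb⟩
      (fun ξ hξ => restrict_eq_withDensity_of_forall_subset hEopen.measurableSet (hRdens ξ hξ))
      hZmeas (fun n hn => hasCondDistrib_of_condExp_comp_sup hZmmeas hZmeas hn (hZcond n hn))
      ⟨hqmeas, hqnonneg, hqbdd, fun a => .of_dist_le' fun b _ b' _ => hqLip1 a b' b⟩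
      (fun b => .of_dist_le' fun a a' => hqLip2 a' a b) hQ (by positivity)
      (inv_lt_one_of_one_lt₀ hbc) h_cov ⟨hKmeas, hKnonneg, hKbdd, hKint, hKsupp⟩ hw1 hBeta hw
      (by linarith) (by simpa only [finrank_euclideanSpace_fin] using hγ) hx y
end

section
/- The process (Zₙ⁻)_{n≥1} defined by Zₙ⁻ := Φ_{Z_{n−1}}(Sₙ) is a Markov chain: for every n ≥ 1 and every Borel set B ⊆ ℝ^d, P(Z_{n+1}⁻ ∈ B | Z₁⁻, …, Zₙ⁻) = R(Zₙ⁻, B) almost surely, where the transition kernel R is given by R(y, B) := ∫_E S(z, Φ_z^{−1}(B) ∩ [0, ∞)) Q(y, dz) and Φ_z^{−1}(B) := {t ∈ ℝ : Φ_z(t) ∈ B}. -/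
open MeasureTheory ProbabilityTheory Filter

/-!
The σ-algebra generated by `Z₁⁻, …, Zₙ⁻` sits inside `𝒢ₙ₋₁ ∨ σ(Sₙ)`, which sits inside `𝒢ₙ`. Given
the last, `Z⁻ₙ₊₁ = Φ_{Zₙ}(Sₙ₊₁)` has a law depending only on `Zₙ`, because `Zₙ` may be frozen while
`Sₙ₊₁` is drawn from `S(Zₙ, ·)`. Given the middle one, `Zₙ` has law `Q(Zₙ⁻, ·)`, so averaging over
`Zₙ` leaves the law `R(Zₙ⁻, ·)` for `Z⁻ₙ₊₁`. This depends only on `Zₙ⁻`, so it is also the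
conditional law given the smallest of the three.
-/

section CondLaw

/-- The conditional law of `Y` given `m` is the conditional mean of `ω ↦ κ (X ω)` given `m`; for
`m`-measurable `X` it is `κ (X ω)` itself, see `hasCondLaw_iff_condExp`. Leaving `X` free to be
non-`m`-measurable lets the notion pass to smaller σ-algebras, and testing on the events of `m`
makes successive averaging the composition of kernels. `X` and `Y` are meant to be measurable,
since `Measure.map` is `0` otherwise. -/
def HasCondLaw {Ω α β : Type*} (m : MeasurableSpace Ω) {_ : MeasurableSpace Ω}
    [MeasurableSpace α] [MeasurableSpace β] (P : Measure Ω) (Y : Ω → β) (κ : Kernel α β)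
    (X : Ω → α) : Prop :=
  ∀ s, MeasurableSet[m] s → (P.restrict s).map Y = κ ∘ₘ (P.restrict s).map X

variable {Ω α β γ : Type*} {m m₁ m₂ : MeasurableSpace Ω} {mΩ : MeasurableSpace Ω}
  [MeasurableSpace α] [MeasurableSpace β] [MeasurableSpace γ] {P : Measure Ω}
  {X : Ω → α} {Y : Ω → β} {κ : Kernel α β}

namespace HasCondLaw

lemma mono (h : HasCondLaw m₂ P Y κ X) (hm : m₁ ≤ m₂) : HasCondLaw m₁ P Y κ X :=
  fun s hs ↦ h s (hm s hs)

lemma comp {V : Ω → γ} {η : Kernel γ α} (hY : HasCondLaw m P Y κ X) (hX : HasCondLaw m P X η V) :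
    HasCondLaw m P Y (κ ∘ₖ η) V := fun s hs ↦ by
  rw [hY s hs, hX s hs, Measure.comp_assoc]

lemma map {f : β → γ} (h : HasCondLaw m P Y κ X) (hY : Measurable Y) (hf : Measurable f) :
    HasCondLaw m P (f ∘ Y) (κ.map f) X := fun s hs ↦ by
  rw [← Measure.map_map hf hY, h s hs, Measure.map_comp _ _ hf]

lemma prodMk [IsFiniteMeasure P] [IsFiniteKernel κ] (h : HasCondLaw m P Y κ X)
    (hm : m ≤ mΩ) (hX : Measurable[m] X) (hY : Measurable Y) :
    HasCondLaw m P (fun ω ↦ (X ω, Y ω)) (Kernel.id ×ₖ κ) X := fun s hs ↦ by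
  have hX' : Measurable X := hX.mono hm le_rfl
  rw [← Measure.compProd_eq_comp_prod]
  refine Measure.ext_prod fun {a b} ha hb ↦ ?_
  calc (P.restrict s).map (fun ω ↦ (X ω, Y ω)) (a ×ˢ b)
      = (P.restrict (s ∩ X ⁻¹' a)).map Y b := by
        rw [Measure.map_apply (hX'.prodMk hY) (ha.prod hb), Measure.map_apply hY hb,
          Set.inter_comm s, ← Measure.restrict_restrict (hX' ha), Measure.restrict_apply (hY hb),
          Set.mk_preimage_prod, Set.inter_comm]
    _ = ∫⁻ x in a, κ x b ∂(P.restrict s).map X := by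
        rw [h _ (hs.inter (hX ha)), Measure.bind_apply hb κ.aemeasurable, Set.inter_comm s,
          ← Measure.restrict_restrict (hX' ha), Measure.restrict_map hX' ha]
    _ = ((P.restrict s).map X ⊗ₘ κ) (a ×ˢ b) := (Measure.compProd_apply_prod ha hb).symm

end HasCondLaw

lemma measureReal_comp_map [IsFiniteKernel κ] {μ : Measure Ω} (hX : Measurable X) {B : Set β}
    (hB : MeasurableSet B) : (κ ∘ₘ μ.map X).real B = ∫ ω, (κ (X ω)).real B ∂μ := by
  have hκB : Measurable fun x ↦ κ x B := κ.measurable_coe hB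
  rw [measureReal_def, Measure.bind_apply hB κ.aemeasurable, lintegral_map hκB hX]
  exact (integral_toReal (hκB.comp hX).aemeasurable (.of_forall fun ω ↦ measure_lt_top _ _)).symm

theorem hasCondLaw_iff_condExp [IsFiniteMeasure P] [IsFiniteKernel κ] (hm : m ≤ mΩ)
    (hX : Measurable[m] X) (hY : Measurable Y) :
    HasCondLaw m P Y κ X ↔
      ∀ B, MeasurableSet B → P⟦Y ⁻¹' B | m⟧ =ᵐ[P] fun ω ↦ (κ (X ω)).real B := by
  have hX' : Measurable X := hX.mono hm le_rfl
  have map_real (s : Set Ω) {B : Set β} (hB : MeasurableSet B) :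
      ((P.restrict s).map Y).real B = ∫ ω in s, (Y ⁻¹' B).indicator (fun _ ↦ (1 : ℝ)) ω ∂P := by
    rw [map_measureReal_apply hY hB, integral_indicator_const _ (hY hB), smul_eq_mul, mul_one]
  have integrable_indicator {B : Set β} (hB : MeasurableSet B) :
      Integrable ((Y ⁻¹' B).indicator fun _ ↦ (1 : ℝ)) P :=
    (integrable_const 1).indicator (hY hB)
  constructor
  · intro h B hB
    have hκB : Measurable[m] fun ω ↦ (κ (X ω)).real B :=
      (κ.measurable_coe hB).ennreal_toReal.comp hX
    have hint : Integrable (fun ω ↦ (κ (X ω)).real B) P :=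
      .of_bound (hκB.mono hm le_rfl).aestronglyMeasurable κ.bound.toReal <| .of_forall fun ω ↦ by
        rw [Real.norm_of_nonneg measureReal_nonneg]
        exact ENNReal.toReal_mono κ.bound_ne_top (κ.measure_le_bound _ _)
    refine (ae_eq_condExp_of_forall_setIntegral_eq hm (integrable_indicator hB)
      (fun _ _ _ ↦ hint.integrableOn) (fun s hs _ ↦ ?_)
      hκB.stronglyMeasurable.aestronglyMeasurable).symm
    rw [← measureReal_comp_map hX' hB, ← h s hs, map_real s hB]
  · intro h s hs
    ext B hB
    rw [← measureReal_eq_measureReal_iff, map_real s hB, measureReal_comp_map hX' hB,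
      ← setIntegral_condExp hm (integrable_indicator hB) hs]
    exact integral_congr_ae (ae_restrict_of_ae (h B hB))

lemma HasCondLaw.of_condExp_comp [IsFiniteMeasure P] [IsFiniteKernel κ] (hm : m ≤ mΩ)
    (hX : Measurable[m] X) (hY : Measurable Y)
    (h : ∀ g : β → ℝ, Measurable g → (∃ C, ∀ y, |g y| ≤ C) →
      P[fun ω ↦ g (Y ω) | m] =ᵐ[P] fun ω ↦ ∫ y, g y ∂κ (X ω)) :
    HasCondLaw m P Y κ X := by
  refine (hasCondLaw_iff_condExp hm hX hY).2 fun B hB ↦ ?_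
  have hbound (y : β) : |B.indicator (fun _ ↦ (1 : ℝ)) y| ≤ 1 := by
    simpa using norm_indicator_le_norm_self (fun _ ↦ (1 : ℝ)) y
  refine (h (B.indicator fun _ ↦ 1) (measurable_const.indicator hB) ⟨1, hbound⟩).trans ?_
  simp only [integral_indicator_const _ hB, smul_eq_mul, mul_one, EventuallyEq.rfl]

end CondLaw

lemma exists_isFiniteKernel_eqOn {α β : Type*} [MeasurableSpace α] [MeasurableSpace β]
    {E : Set α} (hE : MeasurableSet E) {σ : α → Measure β}
    (hσ : ∀ B, MeasurableSet B → Measurable fun x ↦ σ x B)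
    (hσprob : ∀ x ∈ E, IsProbabilityMeasure (σ x)) :
    ∃ κ : Kernel α β, IsFiniteKernel κ ∧ Set.EqOn κ σ E := by
  classical
  let κ : Kernel α β :=
    Kernel.piecewise hE ⟨σ, Measure.measurable_of_measurable_coe _ hσ⟩ 0
  have hκ : Set.EqOn κ σ E := fun x hx ↦ if_pos hx
  refine ⟨κ, ⟨1, ENNReal.one_lt_top, fun x ↦ ?_⟩, hκ⟩
  by_cases hx : x ∈ E
  · have := hσprob x hx
    rw [hκ hx]
    exact prob_le_one
  · simp [κ, Kernel.piecewise_apply, hx]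

section PreJump

variable {Ω X Y T : Type*} [MeasurableSpace Y] {Φ : X → T → Y} {Z : ℕ → Ω → X} {S : ℕ → Ω → T}
  {n i : ℕ}

/-- The pre-jump location `Z⁻ₙ₊₁ = Φ_{Zₙ}(Sₙ₊₁)`; the index is shifted by one so as to start
at `0`. -/
def preJump (Φ : X → T → Y) (Z : ℕ → Ω → X) (S : ℕ → Ω → T) (n : ℕ) (ω : Ω) : Y :=
  Φ (Z n ω) (S (n + 1) ω)

/-- The σ-algebra generated by the first `n` pre-jump locations `Z₁⁻, …, Zₙ⁻`. -/
abbrev preJumpHistory (Φ : X → T → Y) (Z : ℕ → Ω → X) (S : ℕ → Ω → T) (n : ℕ) :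
    MeasurableSpace Ω :=
  ⨆ i : Fin n, MeasurableSpace.comap (preJump Φ Z S i.1) inferInstance

lemma measurable_preJumpHistory (h : i < n) :
    Measurable[preJumpHistory Φ Z S n] (preJump Φ Z S i) :=
  measurable_iff_comap_le.2 <|
    le_iSup (fun j : Fin n ↦ MeasurableSpace.comap (preJump Φ Z S j.1) inferInstance) ⟨i, h⟩

variable [MeasurableSpace X] [MeasurableSpace T]

/-- The transition kernel `R` of the pre-jump locations: jump from `y` to a point `x` drawn from
`η y`, then follow `Φ x` for a time drawn from `κ x`. -/
noncomputable def preJumpKernel (Φ : X → T → Y) (κ : Kernel X T) (η : Kernel Y X) : Kernel Y Y :=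
  (Kernel.id ×ₖ κ).map (Function.uncurry Φ) ∘ₖ η

instance {κ : Kernel X T} [IsFiniteKernel κ] {η : Kernel Y X} [IsFiniteKernel η] :
    IsFiniteKernel (preJumpKernel Φ κ η) := by
  unfold preJumpKernel
  infer_instance

lemma preJumpKernel_apply {κ : Kernel X T} [IsSFiniteKernel κ] {η : Kernel Y X}
    (hΦ : Measurable (Function.uncurry Φ)) (y : Y) {B : Set Y} (hB : MeasurableSet B) :
    preJumpKernel Φ κ η y B = ∫⁻ x, κ x (Φ x ⁻¹' B) ∂η y := by
  rw [preJumpKernel, Kernel.comp_apply' _ _ _ hB]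
  refine lintegral_congr fun x ↦ ?_
  rw [Kernel.map_apply' _ hΦ _ hB, Kernel.id_prod_apply' _ _ (hΦ hB)]
  rfl

/-- The σ-algebra `𝒢ₙ` generated by the post-jump locations `Z₀, …, Zₙ` and the inter-jump times
`S₀, …, Sₙ`. -/
abbrev history (Z : ℕ → Ω → X) (S : ℕ → Ω → T) (n : ℕ) : MeasurableSpace Ω :=
  ⨆ i : Fin (n + 1), (MeasurableSpace.comap (Z i.1) inferInstance ⊔
    MeasurableSpace.comap (S i.1) inferInstance)

lemma measurable_history_location (h : i ≤ n) : Measurable[history Z S n] (Z i) :=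
  measurable_iff_comap_le.2 <| le_sup_left.trans <|
    le_iSup (fun j : Fin (n + 1) ↦ MeasurableSpace.comap (Z j.1) inferInstance ⊔
      MeasurableSpace.comap (S j.1) inferInstance) ⟨i, by lia⟩

lemma measurable_history_time (h : i ≤ n) : Measurable[history Z S n] (S i) :=
  measurable_iff_comap_le.2 <| le_sup_right.trans <|
    le_iSup (fun j : Fin (n + 1) ↦ MeasurableSpace.comap (Z j.1) inferInstance ⊔
      MeasurableSpace.comap (S j.1) inferInstance) ⟨i, by lia⟩

lemma history_le [mΩ : MeasurableSpace Ω] (hZ : ∀ n, Measurable (Z n))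
    (hS : ∀ n, Measurable (S n)) (n : ℕ) : history Z S n ≤ mΩ :=
  iSup_le fun _ ↦ sup_le (hZ _).comap_le (hS _).comap_le

lemma history_sup_comap_le_history_succ (n : ℕ) :
    history Z S n ⊔ MeasurableSpace.comap (S (n + 1)) inferInstance ≤ history Z S (n + 1) :=
  sup_le
    (iSup_le fun i ↦ sup_le (measurable_history_location (by lia)).comap_le
      (measurable_history_time (by lia)).comap_le)
    (measurable_history_time le_rfl).comap_le

lemma preJumpHistory_succ_le_history_sup_comap (hΦ : Measurable (Function.uncurry Φ)) (n : ℕ) :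
    preJumpHistory Φ Z S (n + 1) ≤
      history Z S n ⊔ MeasurableSpace.comap (S (n + 1)) inferInstance := by
  refine iSup_le fun i ↦ Measurable.comap_le (hΦ.comp (Measurable.prodMk ?_ ?_))
  · exact (measurable_history_location (by lia)).mono le_sup_left le_rfl
  · rcases (Nat.le_of_lt_succ i.2).lt_or_eq with hi | hi
    · exact (measurable_history_time hi).mono le_sup_left le_rfl
    · rw [hi]
      exact (comap_measurable _).mono le_sup_right le_rfl

theorem hasCondLaw_preJump [MeasurableSpace Ω] {P : Measure Ω} [IsFiniteMeasure P]
    {κ : Kernel X T} [IsFiniteKernel κ] {η : Kernel Y X} (hΦ : Measurable (Function.uncurry Φ))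
    (hZ : ∀ n, Measurable (Z n)) (hS : ∀ n, Measurable (S n))
    (hκ : HasCondLaw (history Z S (n + 1)) P (S (n + 2)) κ (Z (n + 1)))
    (hη : HasCondLaw (history Z S n ⊔ MeasurableSpace.comap (S (n + 1)) inferInstance) P
      (Z (n + 1)) η (preJump Φ Z S n)) :
    HasCondLaw (preJumpHistory Φ Z S (n + 1)) P (preJump Φ Z S (n + 1)) (preJumpKernel Φ κ η)
      (preJump Φ Z S n) := by
  have hpair := hκ.prodMk (history_le hZ hS _) (measurable_history_location le_rfl) (hS _)
  have hflow := hpair.map ((hZ _).prodMk (hS _)) hΦ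
  exact ((hflow.mono (history_sup_comap_le_history_succ n)).comp hη).mono
    (preJumpHistory_succ_le_history_sup_comap hΦ n)

end PreJump

lemma preJumpKernel_real_eq_setLIntegral {X Y : Type*} [MeasurableSpace X] [MeasurableSpace Y]
    {Φ : X → ℝ → Y} {κ : Kernel X ℝ} [IsSFiniteKernel κ] {η : Kernel Y X} {E : Set X}
    (hΦ : Measurable (Function.uncurry Φ)) (hE : MeasurableSet E)
    (hκ : ∀ x ∈ E, κ x (Set.Iio 0) = 0) {y : Y} (hη : η y Eᶜ = 0) {B : Set Y}
    (hB : MeasurableSet B) :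
    (preJumpKernel Φ κ η y).real B = (∫⁻ x in E, κ x {t | 0 ≤ t ∧ Φ x t ∈ B} ∂η y).toReal := by
  rw [measureReal_def, preJumpKernel_apply hΦ y hB,
    ← Measure.restrict_eq_self_of_ae_mem (s := E) (μ := η y) hη, Measure.restrict_restrict hE,
    Set.inter_self]
  congr 1
  refine setLIntegral_congr_fun hE fun x hx ↦ measure_congr ?_
  filter_upwards [measure_eq_zero_iff_ae_notMem.1 (hκ x hx)] with t ht
  exact propext (and_iff_right (not_lt.1 ht)).symm

theorem stmt6_general {Ω X Y : Type*} [MeasurableSpace Ω] [MeasurableSpace X] [MeasurableSpace Y]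
    (P : Measure Ω) [IsFiniteMeasure P] {E : Set X} (hE : MeasurableSet E)
    {Φ : X → ℝ → Y} (hΦ : Measurable (Function.uncurry Φ))
    {Sker : X → Measure ℝ} (hSprob : ∀ z ∈ E, IsProbabilityMeasure (Sker z))
    (hSsupp : ∀ z ∈ E, Sker z (Set.Iio 0) = 0)
    (hSker : ∀ Γ, MeasurableSet Γ → Measurable fun z ↦ Sker z Γ)
    {Qm : Y → Measure X} (hQprob : ∀ y, IsProbabilityMeasure (Qm y))
    (hQsupp : ∀ y, Qm y Eᶜ = 0) (hQm : ∀ B, MeasurableSet B → Measurable fun y ↦ Qm y B)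
    {Z : ℕ → Ω → X} {S : ℕ → Ω → ℝ} (hZ : ∀ n, Measurable (Z n)) (hS : ∀ n, Measurable (S n))
    (hZmem : ∀ n ω, Z n ω ∈ E)
    (hcondS : ∀ n, ∀ g : ℝ → ℝ, Measurable g → (∃ C, ∀ t, |g t| ≤ C) →
      P[fun ω ↦ g (S (n + 1) ω) | history Z S n] =ᵐ[P] fun ω ↦ ∫ t, g t ∂Sker (Z n ω))
    (hcondZ : ∀ n, ∀ g : X → ℝ, Measurable g → (∃ C, ∀ u, |g u| ≤ C) →
      P[fun ω ↦ g (Z (n + 1) ω) |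
          history Z S n ⊔ MeasurableSpace.comap (S (n + 1)) inferInstance]
        =ᵐ[P] fun ω ↦ ∫ u, g u ∂Qm (preJump Φ Z S n ω))
    (n : ℕ) {B : Set Y} (hB : MeasurableSet B) :
    P⟦preJump Φ Z S (n + 1) ⁻¹' B | preJumpHistory Φ Z S (n + 1)⟧ =ᵐ[P] fun ω ↦
      (∫⁻ z in E, Sker z {t | 0 ≤ t ∧ Φ z t ∈ B} ∂Qm (preJump Φ Z S n ω)).toReal := by
  obtain ⟨κ, _, hκ⟩ := exists_isFiniteKernel_eqOn hE hSker hSprob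
  let η : Kernel Y X := ⟨Qm, Measure.measurable_of_measurable_coe _ hQm⟩
  have : IsMarkovKernel η := ⟨hQprob⟩
  have hW (k : ℕ) : Measurable (preJump Φ Z S k) := hΦ.comp ((hZ k).prodMk (hS (k + 1)))
  have hle := preJumpHistory_succ_le_history_sup_comap (Z := Z) (S := S) hΦ n
  have hle' := (history_sup_comap_le_history_succ n).trans (history_le hZ hS (n + 1))
  have hlast := measurable_preJumpHistory (Φ := Φ) (Z := Z) (S := S) n.lt_succ_self
  have hSlaw : HasCondLaw (history Z S (n + 1)) P (S (n + 2)) κ (Z (n + 1)) :=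
    .of_condExp_comp (history_le hZ hS _) (measurable_history_location le_rfl) (hS _) <| by
      simpa only [hκ (hZmem _ _)] using hcondS (n + 1)
  have hZlaw : HasCondLaw (history Z S n ⊔ MeasurableSpace.comap (S (n + 1)) inferInstance) P
      (Z (n + 1)) η (preJump Φ Z S n) :=
    .of_condExp_comp hle' (hlast.mono hle le_rfl) (hZ _) (hcondZ n)
  have hker (y : Y) : (preJumpKernel Φ κ η y).real B =
      (∫⁻ z in E, Sker z {t | 0 ≤ t ∧ Φ z t ∈ B} ∂Qm y).toReal := by
    rw [preJumpKernel_real_eq_setLIntegral hΦ hE (fun x hx ↦ hκ hx ▸ hSsupp x hx) (hQsupp y) hB,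
      setLIntegral_congr_fun hE fun x hx ↦ by rw [hκ hx]]
    rfl
  simpa only [hker] using (hasCondLaw_iff_condExp (hle.trans hle') hlast (hW _)).1
    (hasCondLaw_preJump hΦ hZ hS hSlaw hZlaw) B hB

theorem stmt6
    {d : ℕ} (hd : 1 ≤ d)
    {Ω : Type*} [MeasurableSpace Ω] (P : Measure Ω) [IsProbabilityMeasure P]
    (E : Set (EuclideanSpace ℝ (Fin d))) (hEopen : IsOpen E) (hEne : E.Nonempty)
    (Φ : (EuclideanSpace ℝ (Fin d)) → ℝ → (EuclideanSpace ℝ (Fin d))) (hΦmeas : Measurable (fun p : (EuclideanSpace ℝ (Fin d)) × ℝ => Φ p.1 p.2))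
    (hflow : ∀ ξ : (EuclideanSpace ℝ (Fin d)), ∀ s t : ℝ, Φ ξ (t + s) = Φ (Φ ξ t) s)
    (Sker : (EuclideanSpace ℝ (Fin d)) → Measure ℝ) (hSprob : ∀ z ∈ E, IsProbabilityMeasure (Sker z))
    (hSsupp : ∀ z ∈ E, Sker z (Set.Iio 0) = 0)
    (hSkermeas : ∀ Γ : Set ℝ, MeasurableSet Γ → Measurable fun z => Sker z Γ)
    (Qm : (EuclideanSpace ℝ (Fin d)) → Measure (EuclideanSpace ℝ (Fin d))) (hQprob : ∀ ξ, IsProbabilityMeasure (Qm ξ))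
    (hQsupp : ∀ ξ, Qm ξ Eᶜ = 0)
    (hQkermeas : ∀ B : Set (EuclideanSpace ℝ (Fin d)), MeasurableSet B → Measurable fun ξ => Qm ξ B)
    (Z : ℕ → Ω → (EuclideanSpace ℝ (Fin d))) (S : ℕ → Ω → ℝ)
    (hZmeas : ∀ n, Measurable (Z n)) (hSmeas : ∀ n, Measurable (S n))
    (hZmem : ∀ n ω, Z n ω ∈ E) (hSnonneg : ∀ n ω, 0 ≤ S n ω) (hS0 : ∀ ω, S 0 ω = 0)
    (hcondS : ∀ n : ℕ, ∀ g : ℝ → ℝ, Measurable g → (∃ C, ∀ t, |g t| ≤ C) →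
      P[fun ω => g (S (n+1) ω)|⨆ i : Fin (n+1),
          (MeasurableSpace.comap (Z i.1) inferInstance ⊔ MeasurableSpace.comap (S i.1) inferInstance)]
        =ᵐ[P] fun ω => ∫ t, g t ∂(Sker (Z n ω)))
    (hcondZ : ∀ n : ℕ, ∀ g : (EuclideanSpace ℝ (Fin d)) → ℝ, Measurable g → (∃ C, ∀ u, |g u| ≤ C) →
      P[fun ω => g (Z (n+1) ω)|(⨆ i : Fin (n+1),
          (MeasurableSpace.comap (Z i.1) inferInstance ⊔ MeasurableSpace.comap (S i.1) inferInstance)) ⊔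
          MeasurableSpace.comap (S (n+1)) inferInstance]
        =ᵐ[P] fun ω => ∫ u, g u ∂(Qm (Φ (Z n ω) (S (n+1) ω)))) :
    ∀ n : ℕ, 1 ≤ n → ∀ B : Set (EuclideanSpace ℝ (Fin d)), MeasurableSet B →
      P[fun ω => Set.indicator B (fun _ => (1:ℝ)) (Φ (Z n ω) (S (n+1) ω))|
          ⨆ i : Fin n, MeasurableSpace.comap (fun ω => Φ (Z i.1 ω) (S (i.1+1) ω)) inferInstance]
        =ᵐ[P] fun ω =>
          (∫⁻ z in E, Sker z {t : ℝ | 0 ≤ t ∧ Φ z t ∈ B}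
            ∂(Qm (Φ (Z (n-1) ω) (S n ω)))).toReal := by
  rintro (_ | n) hn B hB
  · contradiction
  · exact stmt6_general P hEopen.measurableSet hΦmeas hSprob hSsupp hSkermeas hQprob hQsupp
      hQkermeas hZmeas hSmeas hZmem hcondS hcondZ n hB
end

section
/- Suppose the Markov kernel R satisfies Doeblin's condition: there exist a probability measure μ on S, a real ε > 0 and an integer k ≥ 1 such that R^k(y, B) ≥ ε μ(B) for every y ∈ S and every measurable B ⊆ S. Then R admits a unique invariant probability measure π, and there exist constants ρ > 1 and κ > 0 such that for every n ≥ 1, sup_{ξ ∈ S} ‖R^n(ξ, ·) − π‖_TV ≤ κ ρ^{−n}, where ‖·‖_TV denotes the total variation norm. -/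
/-!
Write `P = R ^ k` and let `ν = ε μ`. Then `P = U + ν` for a kernel `U` of constant mass
`q = 1 - ε < 1`, and iterating gives `m P ^ n = ∑_{i < n} ν U ^ i + m U ^ n` for every probability
measure `m`. The sum does not depend on `m`, and the remainder has mass `q ^ n`, so any two
probability measures are brought within `q ^ n` of each other by `P ^ n`: this gives uniqueness and
the rate. The full series `π = ∑ i, ν U ^ i` is a probability measure with `π P = π U + ν = π`;
since `π R` is also `P`-invariant, uniqueness for `P` yields `π R = π`.
-/

open MeasureTheory ProbabilityTheory Filter

noncomputable def tvDist {X : Type*} [MeasurableSpace X] (μ ν : Measure X) : ℝ :=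
  ⨆ B : {B : Set X // MeasurableSet B}, |(μ B.1).toReal - (ν B.1).toReal|

open scoped ENNReal Topology

theorem exists_one_lt_pow_div_le {q : ℝ} (hq0 : 0 ≤ q) (hq1 : q < 1) {k : ℕ} (hk : k ≠ 0) :
    ∃ ρ : ℝ, 1 < ρ ∧ ∃ C : ℝ, 0 < C ∧ ∀ n : ℕ, q ^ (n / k) ≤ C * ρ ^ (-(n : ℝ)) := by
  have near_one : ∀ᶠ ρ : ℝ in 𝓝[>] 1, q * ρ ^ k < 1 :=
    (Continuous.tendsto' (by fun_prop) 1 q (by simp)).eventually_lt_const hq1 |>.filter_mono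
      nhdsWithin_le_nhds
  obtain ⟨ρ, hρq, hρ : 1 < ρ⟩ := (near_one.and self_mem_nhdsWithin).exists
  have hρ0 : 0 < ρ := zero_lt_one.trans hρ
  refine ⟨ρ, hρ, ρ ^ k, by positivity, fun n => ?_⟩
  rw [Real.rpow_neg hρ0.le, Real.rpow_natCast, ← div_eq_mul_inv, le_div_iff₀ (by positivity)]
  calc q ^ (n / k) * ρ ^ n
      ≤ q ^ (n / k) * ρ ^ (k * (n / k + 1)) := by
        gcongr
        exacts [hρ.le, (Nat.lt_mul_div_succ n (by omega)).le]
    _ = (q * ρ ^ k) ^ (n / k) * ρ ^ k := by ring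
    _ ≤ 1 * ρ ^ k := by
        gcongr
        exact pow_le_one₀ (by positivity) hρq.le
    _ = ρ ^ k := one_mul _

section TotalVariation

variable {S : Type*} [MeasurableSpace S] {m m' : Measure S}

theorem tvDist_le {r : ℝ} (h : ∀ B, MeasurableSet B → |m.real B - m'.real B| ≤ r) :
    tvDist m m' ≤ r :=
  have : Nonempty {B : Set S // MeasurableSet B} := ⟨⟨∅, .empty⟩⟩
  ciSup_le fun B => h B B.2

theorem abs_measureReal_sub_le_tvDist [IsFiniteMeasure m] [IsFiniteMeasure m'] {B : Set S}
    (hB : MeasurableSet B) : |m.real B - m'.real B| ≤ tvDist m m' := by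
  refine le_ciSup (f := fun B : {B : Set S // MeasurableSet B} => |m.real B - m'.real B|)
    ⟨max (m.real Set.univ) (m'.real Set.univ), ?_⟩ ⟨B, hB⟩
  rintro _ ⟨C, rfl⟩
  exact abs_sub_le_of_nonneg_of_le
    measureReal_nonneg ((measureReal_mono C.1.subset_univ).trans (le_max_left _ _))
    measureReal_nonneg ((measureReal_mono C.1.subset_univ).trans (le_max_right _ _))

theorem eq_of_tvDist_nonpos [IsFiniteMeasure m] [IsFiniteMeasure m'] (h : tvDist m m' ≤ 0) :
    m = m' := by
  ext B hB
  rw [← measureReal_eq_measureReal_iff, ← sub_eq_zero, ← abs_nonpos_iff]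
  exact (abs_measureReal_sub_le_tvDist hB).trans h

theorem tvDist_add_left_le {s u u' : Measure S} [IsFiniteMeasure (s + u)]
    [IsFiniteMeasure (s + u')] {r : ℝ} (hu : u.real Set.univ ≤ r) (hu' : u'.real Set.univ ≤ r) :
    tvDist (s + u) (s + u') ≤ r := by
  have : IsFiniteMeasure s := isFiniteMeasure_of_le (s + u) (Measure.le_add_right le_rfl)
  have : IsFiniteMeasure u := isFiniteMeasure_of_le (s + u) (Measure.le_add_left le_rfl)
  have : IsFiniteMeasure u' := isFiniteMeasure_of_le (s + u') (Measure.le_add_left le_rfl)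
  refine tvDist_le fun B _ => ?_
  rw [measureReal_add_apply, measureReal_add_apply, add_sub_add_left_eq_sub]
  exact abs_sub_le_of_nonneg_of_le measureReal_nonneg ((measureReal_mono B.subset_univ).trans hu)
    measureReal_nonneg ((measureReal_mono B.subset_univ).trans hu')

end TotalVariation

section Powers

variable {S : Type*} [MeasurableSpace S] (κ : Kernel S S)

theorem pow_add_comp (a b : ℕ) (m : Measure S) :
    ⇑(κ ^ (a + b)) ∘ₘ m = ⇑(κ ^ a) ∘ₘ (⇑(κ ^ b) ∘ₘ m) := by
  rw [Kernel.pow_add, Measure.comp_assoc]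

theorem pow_succ_comp (n : ℕ) (m : Measure S) :
    ⇑(κ ^ (n + 1)) ∘ₘ m = ⇑(κ ^ n) ∘ₘ (κ ∘ₘ m) := by
  rw [pow_add_comp, pow_one]

theorem pow_succ_comp' (n : ℕ) (m : Measure S) :
    ⇑(κ ^ (n + 1)) ∘ₘ m = κ ∘ₘ (⇑(κ ^ n) ∘ₘ m) := by
  rw [add_comm, pow_add_comp, pow_one]

theorem pow_zero_comp (m : Measure S) : ⇑(κ ^ 0) ∘ₘ m = m :=
  Measure.bind_dirac

instance isMarkovKernel_pow_s7 [IsMarkovKernel κ] (n : ℕ) : IsMarkovKernel (κ ^ n) := by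
  induction n with
  | zero => exact inferInstanceAs (IsMarkovKernel Kernel.id)
  | succ n ih => exact inferInstanceAs (IsMarkovKernel ((κ ^ n) ∘ₖ κ))

theorem iterK_eq_pow_s7 (n : ℕ) : iterK κ n = ⇑(κ ^ n) := by
  induction n with
  | zero =>
    ext y : 1
    exact (Kernel.id_apply y).symm
  | succ n ih =>
    ext y : 1
    rw [pow_succ']
    exact congrArg (Measure.bind · κ) (congrFun ih y)

variable {κ}

theorem invariant_iff_forall_apply_eq_lintegral {π : Measure S} :
    κ.Invariant π ↔ ∀ B, MeasurableSet B → π B = ∫⁻ y, κ y B ∂π := by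
  rw [Kernel.Invariant, eq_comm, Measure.ext_iff]
  exact forall₂_congr fun B hB => by rw [Measure.bind_apply hB κ.aemeasurable]

theorem invariant_pow {π : Measure S} (h : κ.Invariant π) (n : ℕ) : (κ ^ n).Invariant π := by
  induction n with
  | zero => exact pow_zero_comp κ π
  | succ n ih => exact ih.comp h

theorem pow_comp_apply_univ {c : ℝ≥0∞} (h : ∀ y, κ y Set.univ = c) (n : ℕ) (m : Measure S) :
    (⇑(κ ^ n) ∘ₘ m) Set.univ = c ^ n * m Set.univ := by
  induction n generalizing m with
  | zero => rw [pow_zero_comp, pow_zero, one_mul]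
  | succ n ih =>
    rw [pow_succ_comp, ih, Measure.bind_apply .univ κ.aemeasurable]
    simp only [h, lintegral_const, pow_succ, mul_assoc]

end Powers

section Splitting

variable {S T : Type*} [MeasurableSpace S] [MeasurableSpace T] {U : Kernel S T} {ν : Measure T}

theorem exists_add_const_eq {κ : Kernel S T} [IsFiniteMeasure ν] (h : ∀ y, ν ≤ κ y) :
    ∃ U : Kernel S T, U + Kernel.const S ν = κ := by
  refine ⟨⟨fun y => κ y - ν, Measure.measurable_of_measurable_coe _ fun B hB => ?_⟩, ?_⟩
  · simp_rw [fun y => Measure.sub_apply hB (h y)]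
    exact (κ.measurable_coe hB).sub_const _
  · ext y : 1
    exact Measure.sub_add_cancel_of_le (h y)

theorem apply_univ_eq_one_sub [IsMarkovKernel (U + Kernel.const S ν)] [IsFiniteMeasure ν] (y : S) :
    U y Set.univ = 1 - ν Set.univ :=
  ENNReal.eq_sub_of_add_eq (measure_ne_top _ _) (measure_univ (μ := (U + Kernel.const S ν) y))

theorem add_const_comp (U : Kernel S T) (ν : Measure T) (m : Measure S) :
    ⇑(U + Kernel.const S ν) ∘ₘ m = U ∘ₘ m + m Set.univ • ν := by
  rw [Measure.add_comp, Measure.const_comp]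

end Splitting

section Series

variable {S : Type*} [MeasurableSpace S] {U : Kernel S S} {ν : Measure S}

theorem pow_add_const_comp [IsMarkovKernel (U + Kernel.const S ν)] (n : ℕ) (m : Measure S)
    [IsProbabilityMeasure m] :
    ⇑((U + Kernel.const S ν) ^ n) ∘ₘ m =
      ∑ i ∈ Finset.range n, ⇑(U ^ i) ∘ₘ ν + ⇑(U ^ n) ∘ₘ m := by
  induction n generalizing m with
  | zero => rw [pow_zero_comp, pow_zero_comp, Finset.sum_range_zero, zero_add]
  | succ n ih =>
    rw [pow_succ_comp, ih, add_const_comp, measure_univ, one_smul, Measure.comp_add,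
      Finset.sum_range_succ, pow_succ_comp, add_assoc, add_comm (⇑(U ^ n) ∘ₘ ν)]

/-- The Neumann series `∑ i, ν Uⁱ`. When the Markov kernel `U + ν` is run as a split chain, which at
each step either moves by `U` or regenerates from `ν`, this is `ν Set.univ` times the occupation
measure of one regeneration cycle. -/
noncomputable def neumannSeries (U : Kernel S S) (ν : Measure S) : Measure S :=
  Measure.sum fun i => ⇑(U ^ i) ∘ₘ ν

theorem comp_neumannSeries_add (U : Kernel S S) (ν : Measure S) :
    U ∘ₘ neumannSeries U ν + ν = neumannSeries U ν := by
  have shift : U ∘ₘ neumannSeries U ν = Measure.sum fun i => ⇑(U ^ (i + 1)) ∘ₘ ν := by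
    simp_rw [neumannSeries, pow_succ_comp', Measure.bind_sum _ _ U.aemeasurable]
  ext B hB
  rw [shift, neumannSeries, Measure.add_apply, Measure.sum_apply _ hB, Measure.sum_apply _ hB,
    add_comm, tsum_eq_zero_add' (f := fun i => (⇑(U ^ i) ∘ₘ ν) B) ENNReal.summable, pow_zero_comp]

theorem neumannSeries_apply_univ {c : ℝ≥0∞} (h : ∀ y, U y Set.univ = c) :
    neumannSeries U ν Set.univ = (1 - c)⁻¹ * ν Set.univ := by
  simp_rw [neumannSeries, Measure.sum_apply _ .univ, pow_comp_apply_univ h, ENNReal.tsum_mul_right,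
    ENNReal.tsum_geometric]

theorem invariant_neumannSeries [IsProbabilityMeasure (neumannSeries U ν)] :
    (U + Kernel.const S ν).Invariant (neumannSeries U ν) := by
  rw [Kernel.Invariant, add_const_comp, measure_univ, one_smul, comp_neumannSeries_add]

end Series

section Minorization

variable {S : Type*} [MeasurableSpace S] {κ : Kernel S S} [IsMarkovKernel κ] {ν : Measure S}

theorem measure_univ_le_one_of_forall_le [Nonempty S] (h : ∀ y, ν ≤ κ y) : ν Set.univ ≤ 1 :=
  (h (Classical.arbitrary S) Set.univ).trans_eq measure_univ

variable [IsFiniteMeasure ν]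

theorem exists_invariant_of_forall_le [NeZero ν] (h : ∀ y, ν ≤ κ y) :
    ∃ π : Measure S, IsProbabilityMeasure π ∧ κ.Invariant π := by
  obtain ⟨U, rfl⟩ := exists_add_const_eq h
  have : Nonempty S := Measure.nonempty_of_neZero ν
  have : IsProbabilityMeasure (neumannSeries U ν) := ⟨by
    rw [neumannSeries_apply_univ (apply_univ_eq_one_sub (ν := ν)),
      ENNReal.sub_sub_cancel ENNReal.one_ne_top (measure_univ_le_one_of_forall_le h),
      ENNReal.inv_mul_cancel (Measure.measure_univ_ne_zero.2 (NeZero.ne ν)) (measure_ne_top _ _)]⟩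
  exact ⟨neumannSeries U ν, this, invariant_neumannSeries⟩

theorem tvDist_pow_comp_le (h : ∀ y, ν ≤ κ y) (n : ℕ) (m m' : Measure S) [IsProbabilityMeasure m]
    [IsProbabilityMeasure m'] :
    tvDist (⇑(κ ^ n) ∘ₘ m) (⇑(κ ^ n) ∘ₘ m') ≤ (1 - ν.real Set.univ) ^ n := by
  obtain ⟨U, rfl⟩ := exists_add_const_eq h
  have : Nonempty S := nonempty_of_isProbabilityMeasure m
  have residual_mass (m : Measure S) [IsProbabilityMeasure m] :
      (⇑(U ^ n) ∘ₘ m).real Set.univ = (1 - ν.real Set.univ) ^ n := by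
    rw [Measure.real, pow_comp_apply_univ (apply_univ_eq_one_sub (ν := ν)),
      measure_univ (μ := m), mul_one, ENNReal.toReal_pow,
      ENNReal.toReal_sub_of_le (measure_univ_le_one_of_forall_le h) ENNReal.one_ne_top,
      ENNReal.toReal_one, Measure.real]
  have finite (m : Measure S) [IsProbabilityMeasure m] :
      IsFiniteMeasure (∑ i ∈ Finset.range n, ⇑(U ^ i) ∘ₘ ν + ⇑(U ^ n) ∘ₘ m) := by
    rw [← pow_add_const_comp]
    infer_instance
  rw [pow_add_const_comp, pow_add_const_comp]
  exact tvDist_add_left_le (residual_mass m).le (residual_mass m').le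

theorem one_sub_measureReal_univ_mem_Ico [NeZero ν] (h : ∀ y, ν ≤ κ y) :
    1 - ν.real Set.univ ∈ Set.Ico 0 1 := by
  have : Nonempty S := Measure.nonempty_of_neZero ν
  have pos : 0 < ν.real Set.univ := measureReal_univ_pos
  have le_one : ν.real Set.univ ≤ 1 :=
    ENNReal.toReal_le_of_le_ofReal zero_le_one
      ((measure_univ_le_one_of_forall_le h).trans_eq ENNReal.ofReal_one.symm)
  exact ⟨sub_nonneg.2 le_one, sub_lt_self 1 pos⟩

theorem eq_of_invariant_of_forall_le [NeZero ν] (h : ∀ y, ν ≤ κ y) {π π' : Measure S}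
    [IsProbabilityMeasure π] [IsProbabilityMeasure π'] (hπ : κ.Invariant π)
    (hπ' : κ.Invariant π') : π = π' := by
  obtain ⟨hq0, hq1⟩ := one_sub_measureReal_univ_mem_Ico h
  refine eq_of_tvDist_nonpos
    (ge_of_tendsto' (tendsto_pow_atTop_nhds_zero_of_lt_one hq0 hq1) fun n => ?_)
  simpa only [(invariant_pow hπ n).def, (invariant_pow hπ' n).def] using
    tvDist_pow_comp_le h n π π'

end Minorization

section Doeblin

variable {S : Type*} [MeasurableSpace S] {κ : Kernel S S} [IsMarkovKernel κ]
  {ν : Measure S} [IsFiniteMeasure ν] {k : ℕ}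

theorem invariant_of_invariant_pow [NeZero ν] (h : ∀ y, ν ≤ (κ ^ k) y) {π : Measure S}
    [IsProbabilityMeasure π] (hπ : (κ ^ k).Invariant π) : κ.Invariant π := by
  have step : (κ ^ k).Invariant (κ ∘ₘ π) := by
    rw [Kernel.Invariant, ← pow_succ_comp, pow_succ_comp', hπ.def]
  exact eq_of_invariant_of_forall_le h step hπ

theorem tvDist_pow_apply_le (h : ∀ y, ν ≤ (κ ^ k) y) {π : Measure S} [IsProbabilityMeasure π]
    (hπ : κ.Invariant π) (n : ℕ) (y : S) :
    tvDist ((κ ^ n) y) π ≤ (1 - ν.real Set.univ) ^ (n / k) := by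
  have split : (κ ^ n) y = ⇑((κ ^ k) ^ (n / k)) ∘ₘ ((κ ^ (n % k)) y) := by
    rw [← Kernel.comp_apply, ← pow_mul, ← Kernel.pow_add, Nat.div_add_mod]
  have fixed : ⇑((κ ^ k) ^ (n / k)) ∘ₘ π = π := invariant_pow (invariant_pow hπ k) (n / k)
  calc tvDist ((κ ^ n) y) π
      = tvDist (⇑((κ ^ k) ^ (n / k)) ∘ₘ ((κ ^ (n % k)) y)) (⇑((κ ^ k) ^ (n / k)) ∘ₘ π) := by
        rw [split, fixed]
    _ ≤ (1 - ν.real Set.univ) ^ (n / k) := tvDist_pow_comp_le h _ _ _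

end Doeblin

theorem stmt7 {S : Type*} [MeasurableSpace S]
    (R : S → Measure S) (hRprob : ∀ y, IsProbabilityMeasure (R y))
    (hRkermeas : ∀ B : Set S, MeasurableSet B → Measurable fun y => R y B)
    (μ : Measure S) (hμprob : IsProbabilityMeasure μ)
    (ε : ℝ) (hε : 0 < ε) (k : ℕ) (hk : 1 ≤ k)
    (hDoeblin : ∀ y : S, ∀ B : Set S, MeasurableSet B → ENNReal.ofReal ε * μ B ≤ iterK R k y B) :
    ∃ π : Measure S, IsProbabilityMeasure π ∧
      (∀ B : Set S, MeasurableSet B → π B = ∫⁻ y, R y B ∂π) ∧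
      (∀ π' : Measure S, IsProbabilityMeasure π' →
        (∀ B : Set S, MeasurableSet B → π' B = ∫⁻ y, R y B ∂π') → π' = π) ∧
      ∃ ρ : ℝ, 1 < ρ ∧ ∃ κ : ℝ, 0 < κ ∧ ∀ n : ℕ, 1 ≤ n → ∀ ξ : S,
        tvDist (iterK R n ξ) π ≤ κ * ρ ^ (-(n:ℝ)) := by
  obtain ⟨κ, rfl⟩ : ∃ κ : Kernel S S, ⇑κ = R :=
    ⟨⟨R, Measure.measurable_of_measurable_coe R hRkermeas⟩, rfl⟩
  have : IsMarkovKernel κ := ⟨hRprob⟩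
  simp only [iterK_eq_pow_s7, ← invariant_iff_forall_apply_eq_lintegral] at hDoeblin ⊢
  have : IsFiniteMeasure (ENNReal.ofReal ε • μ) := Measure.smul_finite μ ENNReal.ofReal_ne_top
  have minorization (y : S) : ENNReal.ofReal ε • μ ≤ (κ ^ k) y := Measure.le_iff.2 (hDoeblin y)
  have : NeZero (ENNReal.ofReal ε • μ) := ⟨by simp [hε.not_ge, IsProbabilityMeasure.ne_zero μ]⟩
  obtain ⟨π, hπprob, hπk⟩ := exists_invariant_of_forall_le minorization
  have hπ : κ.Invariant π := invariant_of_invariant_pow minorization hπk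
  obtain ⟨hq0, hq1⟩ := one_sub_measureReal_univ_mem_Ico minorization
  obtain ⟨ρ, hρ, C, hC, rate⟩ := exists_one_lt_pow_div_le hq0 hq1 (Nat.one_le_iff_ne_zero.1 hk)
  exact ⟨π, hπprob, hπ, fun π' _ hπ' => eq_of_invariant_of_forall_le minorization
    (invariant_pow hπ' k) hπk, ρ, hρ, C, hC,
    fun n _ ξ => (tvDist_pow_apply_le minorization hπ n ξ).trans (rate n)⟩
end

section
/- The function r : ℝ^d × E → [0, ∞) defined by r(x, y) := ∫_0^{−t⁻(y)} q(x, Φ_y(−s)) f(Φ_y(−s), s) DΦ_y(−s) ds is bounded, with ‖r‖_∞ ≤ ‖t⁻‖_∞ ‖q‖_∞ ‖f‖_∞ ‖DΦ‖_∞, and there exists a constant [r]_Lip > 0 such that for every x ∈ ℝ^d, every y ∈ E and every u ∈ ℝ^d with y + u ∈ E, |r(x, y + u) − r(x, y)| ≤ [r]_Lip |u|. -/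
open MeasureTheory ProbabilityTheory Filter

/-!
The integrand of `r(x, y)` is a product of three bounded functions that are Lipschitz in `y`, hence
is itself bounded and Lipschitz in `y`, uniformly in `x` and `s`. Changing `y` changes the integral
in two ways: through the integrand, on an interval of length at most `‖t⁻‖_∞`, and through the
upper endpoint, which moves by at most `[t⁻]_Lip |u|` while the integrand stays bounded.
-/

section BoundedLipschitz

open scoped NNReal

variable {Y : Type*} [PseudoMetricSpace Y]

theorem lipschitzWith_mul_of_norm_le {R : Type*} [NonUnitalSeminormedRing R] {f g : Y → R}
    {Kf Kg Cf Cg : ℝ≥0} (hf : LipschitzWith Kf f) (hg : LipschitzWith Kg g)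
    (hfC : ∀ y, ‖f y‖ ≤ Cf) (hgC : ∀ y, ‖g y‖ ≤ Cg) :
    LipschitzWith (Kf * Cg + Cf * Kg) (fun y ↦ f y * g y) := by
  refine .of_dist_le_mul fun y z ↦ ?_
  have hfyz : ‖f y - f z‖ ≤ Kf * dist y z := dist_eq_norm (f y) (f z) ▸ hf.dist_le_mul y z
  have hgyz : ‖g y - g z‖ ≤ Kg * dist y z := dist_eq_norm (g y) (g z) ▸ hg.dist_le_mul y z
  calc dist (f y * g y) (f z * g z)
      = ‖(f y - f z) * g y + f z * (g y - g z)‖ := by rw [dist_eq_norm]; congr 1; noncomm_ring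
    _ ≤ Kf * dist y z * Cg + Cf * (Kg * dist y z) :=
        norm_add_le_of_le (norm_mul_le_of_le hfyz (hgC y)) (norm_mul_le_of_le (hfC z) hgyz)
    _ = ↑(Kf * Cg + Cf * Kg) * dist y z := by push_cast; ring

variable {F : Type*} [NormedAddCommGroup F]

theorem intervalIntegrable_of_norm_le {g : ℝ → F} {C : ℝ} (hg : AEStronglyMeasurable g)
    (hgC : ∀ t, ‖g t‖ ≤ C) (a b : ℝ) : IntervalIntegrable g volume a b :=
  intervalIntegrable_const.mono_fun' (g := fun _ ↦ C) hg.restrict (.of_forall hgC)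

variable [NormedSpace ℝ F]

theorem lipschitzOnWith_intervalIntegral {g : Y → ℝ → F} {a : ℝ} {b : Y → ℝ} {E : Set Y}
    {K C Kb T : ℝ≥0} (hgm : ∀ y ∈ E, AEStronglyMeasurable (g y)) (hgC : ∀ y ∈ E, ∀ t, ‖g y t‖ ≤ C)
    (hgK : ∀ t, LipschitzOnWith K (g · t) E) (hbT : ∀ y ∈ E, |b y - a| ≤ T)
    (hbK : LipschitzOnWith Kb b E) :
    LipschitzOnWith (K * T + C * Kb) (fun y ↦ ∫ t in a..b y, g y t) E := by
  refine .of_dist_le_mul fun y hy z hz ↦ ?_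
  have hint : ∀ w ∈ E, ∀ c c', IntervalIntegrable (g w) volume c c' := fun w hw ↦
    intervalIntegrable_of_norm_le (hgm w hw) (hgC w hw)
  have hsplit : (∫ t in a..b y, g y t) - ∫ t in a..b z, g z t =
      (∫ t in a..b z, (g y t - g z t)) + ∫ t in b z..b y, g y t := by
    rw [intervalIntegral.integral_sub (hint y hy _ _) (hint z hz _ _),
      ← intervalIntegral.integral_add_adjacent_intervals (hint y hy a (b z)) (hint y hy _ (b y))]
    abel
  have hintegrand : ‖∫ t in a..b z, (g y t - g z t)‖ ≤ K * dist y z * |b z - a| :=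
    intervalIntegral.norm_integral_le_of_norm_le_const fun t _ ↦
      dist_eq_norm (g y t) (g z t) ▸ (hgK t).dist_le_mul y hy z hz
  have hendpoint : ‖∫ t in b z..b y, g y t‖ ≤ C * |b y - b z| :=
    intervalIntegral.norm_integral_le_of_norm_le_const fun t _ ↦ hgC y hy t
  calc dist (∫ t in a..b y, g y t) (∫ t in a..b z, g z t)
      ≤ K * dist y z * |b z - a| + C * |b y - b z| := by
        rw [dist_eq_norm, hsplit]
        exact norm_add_le_of_le hintegrand hendpoint
    _ ≤ K * dist y z * T + C * (Kb * dist y z) := by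
        gcongr
        exacts [hbT z hz, hbK.dist_le_mul y hy z hz]
    _ = ↑(K * T + C * Kb) * dist y z := by push_cast; ring

end BoundedLipschitz

section BackwardFlow

open scoped NNReal

variable {Y Z : Type*}

/-- The integrand `q(x, Φ_y(-s)) f(Φ_y(-s), s) DΦ_y(-s)` of `r(x, y)`, at backward time `s` along
the flow through `y`, with `q(x, ·)` abstracted to a function `φ`: the dependence on `x` enters the
estimates only through the bound and the Lipschitz constant of `φ`. -/
def backwardFlowIntegrand (φ : Z → ℝ) (Φ : Y → ℝ → Z) (f : Z → ℝ → ℝ) (DΦ : Y → ℝ → ℝ)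
    (y : Y) (s : ℝ) : ℝ :=
  φ (Φ y (-s)) * f (Φ y (-s)) s * DΦ y (-s)

variable {φ : Z → ℝ} {Φ : Y → ℝ → Z} {f : Z → ℝ → ℝ} {DΦ : Y → ℝ → ℝ}

theorem measurable_backwardFlowIntegrand [MeasurableSpace Z] {y : Y} (hφ : Measurable φ)
    (hΦ : Measurable (Φ y)) (hf : Measurable (Function.uncurry f)) (hDΦ : Measurable (DΦ y)) :
    Measurable (backwardFlowIntegrand φ Φ f DΦ y) := by
  have hΦneg : Measurable fun s ↦ Φ y (-s) := hΦ.comp measurable_neg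
  exact ((hφ.comp hΦneg).mul (hf.comp (hΦneg.prodMk measurable_id))).mul (hDΦ.comp measurable_neg)

theorem norm_backwardFlowIntegrand_le {Cφ Cf CD : ℝ} (hφ : ∀ z, |φ z| ≤ Cφ)
    (hf : ∀ z s, |f z s| ≤ Cf) (hDΦ : ∀ y s, |DΦ y s| ≤ CD) (y : Y) (s : ℝ) :
    ‖backwardFlowIntegrand φ Φ f DΦ y s‖ ≤ Cφ * Cf * CD :=
  norm_mul_le_of_le (norm_mul_le_of_le (hφ _) (hf _ _)) (hDΦ _ _)

theorem abs_integral_backwardFlowIntegrand_le {Cφ Cf CD T b : ℝ} (hφ : ∀ z, |φ z| ≤ Cφ)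
    (hf : ∀ z s, |f z s| ≤ Cf) (hDΦ : ∀ y s, |DΦ y s| ≤ CD) (hb : |b| ≤ T) (y : Y) :
    |∫ s in 0..b, backwardFlowIntegrand φ Φ f DΦ y s| ≤ T * Cφ * Cf * CD := by
  have hbound := norm_backwardFlowIntegrand_le (Φ := Φ) hφ hf hDΦ y
  have hC : 0 ≤ Cφ * Cf * CD := (norm_nonneg _).trans (hbound 0)
  calc |∫ s in 0..b, backwardFlowIntegrand φ Φ f DΦ y s|
      ≤ Cφ * Cf * CD * |b - 0| :=
        intervalIntegral.norm_integral_le_of_norm_le_const fun s _ ↦ hbound s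
    _ ≤ Cφ * Cf * CD * T := by rw [sub_zero]; gcongr
    _ = T * Cφ * Cf * CD := by ring

variable [PseudoMetricSpace Y] [PseudoMetricSpace Z]

theorem lipschitzWith_backwardFlowIntegrand {Cφ Cf CD Kφ KΦ Kf KD : ℝ≥0}
    (hφC : ∀ z, |φ z| ≤ Cφ) (hfC : ∀ z s, |f z s| ≤ Cf) (hDC : ∀ y s, |DΦ y s| ≤ CD)
    (hφK : LipschitzWith Kφ φ) (hΦK : ∀ s, LipschitzWith KΦ (Φ · s))
    (hfK : ∀ s, LipschitzWith Kf (f · s)) (hDK : ∀ s, LipschitzWith KD (DΦ · s)) (s : ℝ) :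
    LipschitzWith ((Kφ * KΦ * Cf + Cφ * (Kf * KΦ)) * CD + Cφ * Cf * KD)
      (backwardFlowIntegrand φ Φ f DΦ · s) := by
  have hφf := lipschitzWith_mul_of_norm_le (hφK.comp (hΦK (-s))) ((hfK s).comp (hΦK (-s)))
    (fun _ ↦ hφC _) (fun _ ↦ hfC _ _)
  exact lipschitzWith_mul_of_norm_le (Cf := Cφ * Cf) hφf (hDK (-s))
    (fun _ ↦ norm_mul_le_of_le (hφC _) (hfC _ _)) (fun _ ↦ hDC _ _)

variable [MeasurableSpace Z] {E : Set Y}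

theorem lipschitzOnWith_integral_backwardFlowIntegrand {b : Y → ℝ}
    {T Cφ Cf CD Kb Kφ KΦ Kf KD : ℝ≥0} (hφ : Measurable φ) (hΦ : ∀ y ∈ E, Measurable (Φ y))
    (hf : Measurable (Function.uncurry f)) (hDΦ : ∀ y ∈ E, Measurable (DΦ y))
    (hbT : ∀ y ∈ E, |b y| ≤ T) (hφC : ∀ z, |φ z| ≤ Cφ) (hfC : ∀ z s, |f z s| ≤ Cf)
    (hDC : ∀ y s, |DΦ y s| ≤ CD) (hbK : LipschitzOnWith Kb b E) (hφK : LipschitzWith Kφ φ)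
    (hΦK : ∀ s, LipschitzWith KΦ (Φ · s)) (hfK : ∀ s, LipschitzWith Kf (f · s))
    (hDK : ∀ s, LipschitzWith KD (DΦ · s)) :
    LipschitzOnWith
      (((Kφ * KΦ * Cf + Cφ * (Kf * KΦ)) * CD + Cφ * Cf * KD) * T + Cφ * Cf * CD * Kb)
      (fun y ↦ ∫ s in 0..b y, backwardFlowIntegrand φ Φ f DΦ y s) E := by
  have hmeas : ∀ y ∈ E, Measurable (backwardFlowIntegrand φ Φ f DΦ y) := fun y hy ↦
    measurable_backwardFlowIntegrand hφ (hΦ y hy) hf (hDΦ y hy)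
  have hLip := lipschitzWith_backwardFlowIntegrand hφC hfC hDC hφK hΦK hfK hDK
  exact lipschitzOnWith_intervalIntegral (fun y hy ↦ (hmeas y hy).aestronglyMeasurable)
    (fun y _ ↦ norm_backwardFlowIntegrand_le hφC hfC hDC y) (fun s ↦ (hLip s).lipschitzOnWith)
    (by simpa only [sub_zero] using hbT) hbK

theorem stmt10_general {X : Type*} {q : X → Z → ℝ} {tminus : Y → ℝ}
    {Ct Cf Cq CD tmLip ΦLip fLip qLip DΦLip : ℝ} (htmbdd : ∀ y ∈ E, |tminus y| ≤ Ct)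
    (htmLip : ∀ x ∈ E, ∀ y ∈ E, |tminus x - tminus y| ≤ tmLip * dist x y)
    (hΦmeas : ∀ y ∈ E, Measurable (Φ y))
    (hΦLip : ∀ x y t, dist (Φ x t) (Φ y t) ≤ ΦLip * dist x y)
    (hfmeas : Measurable (Function.uncurry f)) (hfbdd : ∀ x t, |f x t| ≤ Cf)
    (hfLip : ∀ x y t, |f x t - f y t| ≤ fLip * dist x y)
    (hqmeas : ∀ x, Measurable (q x)) (hqbdd : ∀ a b, |q a b| ≤ Cq)
    (hqLip : ∀ a b b', |q a b - q a b'| ≤ qLip * dist b b')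
    (hDΦmeas : ∀ y ∈ E, Measurable (DΦ y)) (hDΦbdd : ∀ x t, |DΦ x t| ≤ CD)
    (hDΦLip : ∀ x y t, |DΦ x t - DΦ y t| ≤ DΦLip * dist x y)
    {r : X → Y → ℝ} (hr : ∀ x, ∀ y ∈ E, r x y =
      ∫ s in 0..-tminus y, q x (Φ y (-s)) * f (Φ y (-s)) s * DΦ y (-s)) :
    (∀ x, ∀ y ∈ E, |r x y| ≤ Ct * Cq * Cf * CD) ∧
    ∃ L : ℝ≥0, 0 < L ∧ ∀ x, LipschitzOnWith L (r x) E := by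
  have hneg : ∀ y ∈ E, |-tminus y| ≤ Ct := fun y hy ↦ (abs_neg _).trans_le (htmbdd y hy)
  have ⟨L, hL⟩ : ∃ L, ∀ x, LipschitzOnWith L
      (fun y ↦ ∫ s in 0..-tminus y, backwardFlowIntegrand (q x) Φ f DΦ y s) E :=
    ⟨_, fun x ↦ lipschitzOnWith_integral_backwardFlowIntegrand (hqmeas x) hΦmeas hfmeas hDΦmeas
      (fun y hy ↦ (hneg y hy).trans (Real.le_coe_toNNReal Ct))
      (fun z ↦ (hqbdd x z).trans (Real.le_coe_toNNReal Cq))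
      (fun z s ↦ (hfbdd z s).trans (Real.le_coe_toNNReal Cf))
      (fun y s ↦ (hDΦbdd y s).trans (Real.le_coe_toNNReal CD))
      (LipschitzOnWith.of_dist_le' htmLip).neg (.of_dist_le' (hqLip x))
      (fun s ↦ .of_dist_le' (hΦLip · · s)) (fun s ↦ .of_dist_le' (hfLip · · s))
      (fun s ↦ .of_dist_le' (hDΦLip · · s))⟩
  refine ⟨fun x y hy ↦ ?_, L + 1, by positivity, fun x y hy z hz ↦ ?_⟩
  · rw [hr x y hy]
    exact abs_integral_backwardFlowIntegrand_le (hqbdd x) hfbdd hDΦbdd (hneg y hy) y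
  · rw [hr x y hy, hr x z hz]
    exact (hL x).weaken le_self_add hy hz

end BackwardFlow

theorem stmt10
    {d : ℕ} (hd : 1 ≤ d)
    (E : Set (EuclideanSpace ℝ (Fin d))) (hEopen : IsOpen E) (hEne : E.Nonempty)
    (tminus : (EuclideanSpace ℝ (Fin d)) → ℝ) (htmmeas : Measurable tminus) (htmneg : ∀ y ∈ E, tminus y ≤ 0)
    (Ct : ℝ) (htmbdd : ∀ y ∈ E, |tminus y| ≤ Ct)
    (tmLip : ℝ) (htmLip : ∀ x ∈ E, ∀ y ∈ E, |tminus x - tminus y| ≤ tmLip * dist x y)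
    (Φ : (EuclideanSpace ℝ (Fin d)) → ℝ → (EuclideanSpace ℝ (Fin d))) (hΦmeas : Measurable (fun p : (EuclideanSpace ℝ (Fin d)) × ℝ => Φ p.1 p.2))
    (ΦLip : ℝ) (hΦLip : ∀ x y : (EuclideanSpace ℝ (Fin d)), ∀ t : ℝ, dist (Φ x t) (Φ y t) ≤ ΦLip * dist x y)
    (f : (EuclideanSpace ℝ (Fin d)) → ℝ → ℝ) (hfmeas : Measurable (fun p : (EuclideanSpace ℝ (Fin d)) × ℝ => f p.1 p.2))
    (hfnonneg : ∀ x t, 0 ≤ f x t)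
    (Cf : ℝ) (hfbdd : ∀ x t, |f x t| ≤ Cf)
    (fLip : ℝ) (hfLip : ∀ x y : (EuclideanSpace ℝ (Fin d)), ∀ t : ℝ, |f x t - f y t| ≤ fLip * dist x y)
    (q : (EuclideanSpace ℝ (Fin d)) → (EuclideanSpace ℝ (Fin d)) → ℝ) (hqmeas : Measurable (Function.uncurry q)) (hqnonneg : ∀ a b, 0 ≤ q a b)
    (Cq : ℝ) (hqbdd : ∀ a b, |q a b| ≤ Cq)
    (qLip : ℝ) (hqLip1 : ∀ a b b' : (EuclideanSpace ℝ (Fin d)), |q a b - q a b'| ≤ qLip * dist b b')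
    (hqLip2 : ∀ a a' b : (EuclideanSpace ℝ (Fin d)), |q a b - q a' b| ≤ qLip * dist a a')
    (DΦ : (EuclideanSpace ℝ (Fin d)) → ℝ → ℝ) (hDΦmeas : Measurable (fun p : (EuclideanSpace ℝ (Fin d)) × ℝ => DΦ p.1 p.2))
    (hDΦnonneg : ∀ x t, 0 ≤ DΦ x t)
    (CD : ℝ) (hDΦbdd : ∀ x t, |DΦ x t| ≤ CD)
    (DΦLip : ℝ) (hDΦLip : ∀ x y : (EuclideanSpace ℝ (Fin d)), ∀ t : ℝ, |DΦ x t - DΦ y t| ≤ DΦLip * dist x y)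
    (r : (EuclideanSpace ℝ (Fin d)) → (EuclideanSpace ℝ (Fin d)) → ℝ)
    (hr : ∀ x : (EuclideanSpace ℝ (Fin d)), ∀ y ∈ E, r x y =
      ∫ s in (0:ℝ)..(-(tminus y)), q x (Φ y (-s)) * f (Φ y (-s)) s * DΦ y (-s)) :
    (∀ x : (EuclideanSpace ℝ (Fin d)), ∀ y ∈ E, |r x y| ≤ Ct * Cq * Cf * CD) ∧
    ∃ L : ℝ, 0 < L ∧ ∀ x : (EuclideanSpace ℝ (Fin d)), ∀ y ∈ E, ∀ u : (EuclideanSpace ℝ (Fin d)), y + u ∈ E →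
      |r x (y + u) - r x y| ≤ L * ‖u‖ := by
  have ⟨hbdd, L, hL, hLip⟩ := stmt10_general htmbdd htmLip (fun _ _ ↦ hΦmeas.of_uncurry_left)
    hΦLip hfmeas hfbdd hfLip (fun _ ↦ hqmeas.of_uncurry_left) hqbdd hqLip1
    (fun _ _ ↦ hDΦmeas.of_uncurry_left) hDΦbdd hDΦLip hr
  exact ⟨hbdd, L, hL, fun x y hy u hu ↦ by
    simpa [Real.dist_eq] using (hLip x).dist_le_mul (y + u) hu y hy⟩
end
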